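/- Existence of continuum spatial waves. Let ω be a regular averaging kernel and let (hf, hg) ∈ 𝒳² satisfy the strictly positive gap condition. Then there exist (0,1)-interpolating functions F, G ∈ Ψ and a real constant α with sgn(α) = sgn(A(hf, hg)) and |α| ≥ |A(hf, hg)|/‖ω‖∞ (where ‖ω‖∞ is the essential supremum of ω), such that G(x) = hg((F ⊗ ω)(x)) and F(x) = hf((G ⊗ ω)(x + α)) for all x ∈ ℝ; equivalently, setting f^t(x) = F(x − αt) and g^t(x) = G(x − αt) for t = 0,1,2,… solves the continuum spatially coupled recursion. -/

import Mathlib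

open MeasureTheory Filter Set

noncomputable section

/-- Convolution `(f ⊗ ω)(x) = ∫ y, f y · ω (x − y)`. -/
def conv (f ω : ℝ → ℝ) (x : ℝ) : ℝ := ∫ y : ℝ, f y * ω (x - y)

/-- `ω` is an averaging kernel: even, nonnegative, of bounded variation, integrating to 1. -/
def IsAveragingKernel (ω : ℝ → ℝ) : Prop :=
  (∀ x, ω (-x) = ω x) ∧ (∀ x, 0 ≤ ω x) ∧ BoundedVariationOn ω Set.univ ∧
    MeasureTheory.Integrable ω ∧ (∫ x : ℝ, ω x) = 1

/-- The essential supremum `‖ω‖∞` of a kernel, as a real number. -/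
def kerSup (ω : ℝ → ℝ) : ℝ := (eLpNorm ω ⊤ MeasureTheory.volume).toReal

/-- `ω` is regular: for some `W ∈ (0,∞]`, it vanishes outside `[−W, W]` and is
positive on `(−W, W)` (the case `W = ∞` being that `ω` is everywhere positive). -/
def IsRegularKernel (ω : ℝ → ℝ) : Prop :=
  (∀ x, 0 < ω x) ∨
    ∃ W : ℝ, 0 < W ∧ (∀ x, W < |x| → ω x = 0) ∧ (∀ x, |x| < W → 0 < ω x)

/-- Membership in `𝒳`: nondecreasing self-maps of `[0,1]`. -/
def MemX (h : ℝ → ℝ) : Prop :=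
  MonotoneOn h (Icc 0 1) ∧ MapsTo h (Icc 0 1) (Icc 0 1)

/-- Left limit `h(u−)` of `h ∈ 𝒳` at `u ∈ [0,1]`, with the convention `h(0−) = 0`. -/
def lm (h : ℝ → ℝ) (u : ℝ) : ℝ := if u ≤ 0 then 0 else sSup (h '' Ico 0 u)

/-- Right limit `h(u+)` of `h ∈ 𝒳` at `u ∈ [0,1]`, with the convention `h(1+) = 1`. -/
def rm (h : ℝ → ℝ) (u : ℝ) : ℝ := if 1 ≤ u then 1 else sInf (h '' Ioc u 1)

/-- A canonical generalized inverse of `h ∈ 𝒳` (any valid inverse has the same integrals,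
so the potential below is unambiguous). -/
def Xinv (h : ℝ → ℝ) (v : ℝ) : ℝ := sInf ({1} ∪ {u ∈ Icc (0:ℝ) 1 | v ≤ h u})

/-- The potential `Φ(hf, hg; u, v) = ∫₀ᵘ hg⁻¹ + ∫₀ᵛ hf⁻¹ − u·v`. -/
def Pot (hf hg : ℝ → ℝ) (u v : ℝ) : ℝ :=
  (∫ x in (0:ℝ)..u, Xinv hg x) + (∫ x in (0:ℝ)..v, Xinv hf x) - u * v

/-- `A(hf, hg) = Φ(hf, hg; 1, 1)`. -/
def Agap (hf hg : ℝ → ℝ) : ℝ := Pot hf hg 1 1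

/-- `(u,v)` is a crossing point of `(hf, hg)`:
`u ∈ [hg(v−), hg(v+)]` and `v ∈ [hf(u−), hf(u+)]`. -/
def IsCrossing (hf hg : ℝ → ℝ) (u v : ℝ) : Prop :=
  u ∈ Icc (0:ℝ) 1 ∧ v ∈ Icc (0:ℝ) 1 ∧
    u ∈ Icc (lm hg v) (rm hg v) ∧ v ∈ Icc (lm hf u) (rm hf u)

/-- The strictly positive gap condition: there is a nontrivial crossing point, and every
nontrivial crossing point satisfies `Φ(hf, hg; u, v) > max {0, A(hf, hg)}`. -/
def StrictPosGap (hf hg : ℝ → ℝ) : Prop :=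
  (∃ u v, IsCrossing hf hg u v ∧ ¬(u = 0 ∧ v = 0) ∧ ¬(u = 1 ∧ v = 1)) ∧
    ∀ u v, IsCrossing hf hg u v → ¬(u = 0 ∧ v = 0) → ¬(u = 1 ∧ v = 1) →
      max 0 (Agap hf hg) < Pot hf hg u v

/-- Membership in `Ψ`: nondecreasing functions `ℝ → [0,1]`. -/
def MemPsi (f : ℝ → ℝ) : Prop := Monotone f ∧ ∀ x, f x ∈ Icc (0:ℝ) 1

/-- `f` is `(a,b)`-interpolating: limits `a` at `−∞` and `b` at `+∞`. -/
def Interpolates (f : ℝ → ℝ) (a b : ℝ) : Prop :=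
  Filter.Tendsto f Filter.atBot (nhds a) ∧ Filter.Tendsto f Filter.atTop (nhds b)


theorem ker_bdd {ω : ℝ → ℝ} (hω : IsAveragingKernel ω) : ∃ C, 0 ≤ C ∧ ∀ x, ω x ≤ C := by
  obtain ⟨_, hp, hbv, _, _⟩ := hω
  refine ⟨ω 0 + (eVariationOn ω Set.univ).toReal, add_nonneg (hp 0) ENNReal.toReal_nonneg, fun x => ?_⟩
  have := hbv.dist_le (mem_univ x) (mem_univ 0)
  rw [Real.dist_eq] at this
  linarith [le_abs_self (ω x - ω 0)]

theorem ker_finite {ω : ℝ → ℝ} (hω : IsAveragingKernel ω) : eLpNorm ω ⊤ volume ≠ ⊤ := by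
  obtain ⟨C, hC0, hC⟩ := ker_bdd hω
  have : eLpNorm ω ⊤ volume ≤ ENNReal.ofReal C := by
    rw [eLpNorm_exponent_top]
    apply eLpNormEssSup_le_of_ae_bound
    exact Eventually.of_forall fun x => by
      rw [Real.norm_of_nonneg (hω.2.1 x)]; exact hC x
  exact ne_top_of_le_ne_top ENNReal.ofReal_ne_top this

theorem ker_le_kerSup {ω : ℝ → ℝ} (hω : IsAveragingKernel ω) : ∀ᵐ x, ω x ≤ kerSup ω := by
  have hfin := ker_finite hω
  have := ae_le_eLpNormEssSup (f := ω) (μ := volume)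
  filter_upwards [this] with x hx
  rw [← eLpNorm_exponent_top] at hx
  unfold kerSup
  have h2 := ENNReal.toReal_mono hfin hx
  rw [← Real.norm_of_nonneg (hω.2.1 x)]
  simpa using h2

theorem kerSup_nonneg {ω : ℝ → ℝ} : 0 ≤ kerSup ω := ENNReal.toReal_nonneg

def Om (ω : ℝ → ℝ) (z : ℝ) : ℝ := ∫ t in Iic z, ω t

theorem Om_sub {ω : ℝ → ℝ} (hω : IsAveragingKernel ω) (a b : ℝ) :
    Om ω b - Om ω a = ∫ t in a..b, ω t := by
  unfold Om
  rw [intervalIntegral.integral_Iic_sub_Iic hω.2.2.2.1.integrableOn hω.2.2.2.1.integrableOn]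

theorem Om_mono {ω : ℝ → ℝ} (hω : IsAveragingKernel ω) : Monotone (Om ω) := by
  intro a b hab
  have := Om_sub hω a b
  have h2 : 0 ≤ ∫ t in a..b, ω t := intervalIntegral.integral_nonneg hab fun x _ => hω.2.1 x
  linarith

theorem Om_nonneg {ω : ℝ → ℝ} (hω : IsAveragingKernel ω) (z : ℝ) : 0 ≤ Om ω z :=
  setIntegral_nonneg measurableSet_Iic fun x _ => hω.2.1 x

theorem Om_symm {ω : ℝ → ℝ} (hω : IsAveragingKernel ω) (z : ℝ) : Om ω z + Om ω (-z) = 1 := by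
  have h1 : Om ω (-z) = ∫ t in Ioi z, ω t := by
    unfold Om
    have := integral_comp_neg_Ioi z ω
    rw [← this]
    simp only [hω.1]
  rw [h1, Om, ← hω.2.2.2.2]
  have := intervalIntegral.integral_Iic_add_Ioi (f := ω) (μ := volume) (b := z) hω.2.2.2.1.integrableOn hω.2.2.2.1.integrableOn
  exact this

theorem Om_le_one {ω : ℝ → ℝ} (hω : IsAveragingKernel ω) (z : ℝ) : Om ω z ≤ 1 := by
  linarith [Om_symm hω z, Om_nonneg hω (-z)]

theorem Om_lip {ω : ℝ → ℝ} (hω : IsAveragingKernel ω) {a b : ℝ} (hab : a ≤ b) :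
    Om ω b - Om ω a ≤ kerSup ω * (b - a) := by
  rw [Om_sub hω]
  have : ∫ t in a..b, ω t ≤ ∫ t in a..b, kerSup ω := by
    apply intervalIntegral.integral_mono_ae hab
    · exact hω.2.2.2.1.intervalIntegrable
    · exact intervalIntegrable_const
    · exact ker_le_kerSup hω
  simpa [mul_comm] using this

theorem Om_cont {ω : ℝ → ℝ} (hω : IsAveragingKernel ω) : Continuous (Om ω) := by
  apply LipschitzWith.continuous (K := Real.toNNReal (kerSup ω))
  apply LipschitzWith.of_le_add_mul
  intro x y
  rw [Real.dist_eq]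
  rw [Real.coe_toNNReal _ kerSup_nonneg]
  rcases le_total x y with h | h
  · have := Om_mono hω h
    have : 0 ≤ kerSup ω * |x - y| := mul_nonneg kerSup_nonneg (abs_nonneg _)
    linarith
  · have := Om_lip hω h
    rw [abs_of_nonneg (by linarith)]; linarith

theorem Om_atBot {ω : ℝ → ℝ} (hω : IsAveragingKernel ω) : Tendsto (Om ω) atBot (nhds 0) := by
  have h := tendsto_setIntegral_of_antitone (μ := volume) (f := ω) (s := fun n : ℕ => Iic (-(n:ℝ)))
    (fun n => measurableSet_Iic) (fun a b hab => Iic_subset_Iic.2 (by simpa using hab))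
    ⟨0, hω.2.2.2.1.integrableOn⟩
  have he : (⋂ n : ℕ, Iic (-(n:ℝ))) = ∅ := by
    ext x; simp only [mem_iInter, mem_Iic, mem_empty_iff_false, iff_false, not_forall, not_le]
    obtain ⟨n, hn⟩ := exists_nat_gt (-x)
    exact ⟨n, by linarith⟩
  rw [he] at h
  simp only [setIntegral_empty] at h
  rw [Metric.tendsto_atTop] at h
  rw [Metric.tendsto_nhds]
  intro ε hε
  obtain ⟨N, hN⟩ := h ε hε
  have h1 := hN N le_rfl
  filter_upwards [eventually_le_atBot (-(N:ℝ))] with x hx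
  rw [Real.dist_eq, sub_zero, abs_of_nonneg (Om_nonneg hω _)]
  have h2 : Om ω (-(N:ℝ)) < ε := by
    rw [Real.dist_eq, sub_zero] at h1
    exact lt_of_abs_lt h1
  exact lt_of_le_of_lt (Om_mono hω hx) h2

theorem Om_zero {ω : ℝ → ℝ} (hω : IsAveragingKernel ω) {W : ℝ} (hW : ∀ x, W < |x| → ω x = 0)
    (hW0 : 0 < W) {z : ℝ} (hz : z ≤ -W) : Om ω z = 0 := by
  unfold Om
  rw [integral_Iic_eq_integral_Iio]
  apply setIntegral_eq_zero_of_forall_eq_zero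
  intro x hx
  apply hW
  rw [mem_Iio] at hx
  rw [abs_of_neg (by linarith)]; linarith

theorem Om_lt {ω : ℝ → ℝ} (hω : IsAveragingKernel ω) {a b : ℝ} (hab : a < b)
    (hp : ∀ x ∈ Ioo a b, 0 < ω x) : Om ω a < Om ω b := by
  have : 0 < ∫ t in a..b, ω t :=
    intervalIntegral.intervalIntegral_pos_of_pos_on hω.2.2.2.1.intervalIntegrable hp hab
  linarith [Om_sub hω a b]

/-! convolution -/
theorem conv_eq (f ω : ℝ → ℝ) (x : ℝ) : conv f ω x = ∫ t, f (x - t) * ω t := by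
  unfold conv
  rw [← integral_sub_left_eq_self (fun y => f y * ω (x - y)) volume x]
  simp

theorem psi_int {ω f : ℝ → ℝ} (hω : IsAveragingKernel ω) (hf : MemPsi f) (x : ℝ) :
    Integrable (fun t => f (x - t) * ω t) := by
  apply Integrable.bdd_mul (c := 1) hω.2.2.2.1
  · exact ((hf.1.measurable).comp (measurable_const.sub measurable_id)).aestronglyMeasurable
  · exact Eventually.of_forall fun t => by
      rw [Real.norm_of_nonneg (hf.2 _).1]; exact (hf.2 _).2

theorem conv_mono_of_le {ω f g : ℝ → ℝ} (hω : IsAveragingKernel ω) (hf : MemPsi f) (hg : MemPsi g)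
    {x y : ℝ} (h : ∀ t, f (x - t) ≤ g (y - t)) : conv f ω x ≤ conv g ω y := by
  rw [conv_eq, conv_eq]
  apply integral_mono (psi_int hω hf x) (psi_int hω hg y)
  intro t
  exact mul_le_mul_of_nonneg_right (h t) (hω.2.1 t)

theorem conv_mono {ω f : ℝ → ℝ} (hω : IsAveragingKernel ω) (hf : MemPsi f) : Monotone (conv f ω) :=
  fun _ _ hab => conv_mono_of_le hω hf hf fun t => hf.1 (by linarith)

theorem conv_const {ω : ℝ → ℝ} (hω : IsAveragingKernel ω) (c x : ℝ) :
    conv (fun _ => c) ω x = c := by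
  rw [conv_eq, integral_const_mul, hω.2.2.2.2, mul_one]

theorem psi_const {c : ℝ} (hc : c ∈ Icc (0:ℝ) 1) : MemPsi (fun _ => c) :=
  ⟨monotone_const, fun _ => hc⟩

theorem conv_psi {ω f : ℝ → ℝ} (hω : IsAveragingKernel ω) (hf : MemPsi f) : MemPsi (conv f ω) := by
  refine ⟨conv_mono hω hf, fun x => ⟨?_, ?_⟩⟩
  · rw [← conv_const hω 0 x]
    exact conv_mono_of_le hω (psi_const (by simp)) hf fun t => (hf.2 _).1
  · rw [← conv_const hω 1 x]
    exact conv_mono_of_le hω hf (psi_const (by simp)) fun t => (hf.2 _).2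

/-- dominated convergence -/
theorem conv_tendsto {ω : ℝ → ℝ} (hω : IsAveragingKernel ω) {ι : Type*} {l : Filter ι}
    [l.IsCountablyGenerated] {fn : ι → ℝ → ℝ} (hfn : ∀ n, MemPsi (fn n)) {f : ℝ → ℝ}
    {x : ι → ℝ} {x0 : ℝ}
    (h : ∀ᵐ t, Tendsto (fun n => fn n (x n - t)) l (nhds (f (x0 - t)))) :
    Tendsto (fun n => conv (fn n) ω (x n)) l (nhds (conv f ω x0)) := by
  simp only [conv_eq]
  apply tendsto_integral_filter_of_dominated_convergence ω
  · exact Eventually.of_forall fun n => (psi_int hω (hfn n) (x n)).aestronglyMeasurable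
  · refine Eventually.of_forall fun n => Eventually.of_forall fun t => ?_
    rw [Real.norm_of_nonneg (mul_nonneg ((hfn n).2 _).1 (hω.2.1 t))]
    exact mul_le_of_le_one_left (hω.2.1 t) ((hfn n).2 _).2
  · exact hω.2.2.2.1
  · filter_upwards [h] with t ht
    exact ht.mul_const _

theorem ae_contAt {f : ℝ → ℝ} (hf : MemPsi f) (x0 : ℝ) :
    ∀ᵐ t, ContinuousAt f (x0 - t) := by
  have h1 := hf.1.countable_not_continuousAt
  have h2 : {t : ℝ | ¬ ContinuousAt f (x0 - t)}.Countable := by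
    have := h1.preimage (f := fun t : ℝ => x0 - t) (by intro a b h; simpa using h)
    exact this
  exact h2.measure_zero volume

/-- pointwise convergence of monotone functions gives convergence along moving points at continuity -/
theorem mono_tendsto_at {ι : Type*} {l : Filter ι} {fn : ι → ℝ → ℝ} (hfn : ∀ n, MemPsi (fn n))
    {f : ℝ → ℝ} (hlim : ∀ y, Tendsto (fun n => fn n y) l (nhds (f y)))
    {x : ι → ℝ} {x0 : ℝ} (hx : Tendsto x l (nhds x0)) (hc : ContinuousAt f x0) :
    Tendsto (fun n => fn n (x n)) l (nhds (f x0)) := by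
  rw [Metric.tendsto_nhds]
  intro ε hε
  rw [Metric.continuousAt_iff] at hc
  obtain ⟨d, hd, hd'⟩ := hc (ε/2) (by linarith)
  have e1 := (Metric.tendsto_nhds.1 (hlim (x0 - d/2))) (ε/2) (by linarith)
  have e2 := (Metric.tendsto_nhds.1 (hlim (x0 + d/2))) (ε/2) (by linarith)
  have e3 := (Metric.tendsto_nhds.1 hx) (d/2) (by linarith)
  have a1 := @hd' (x0 - d/2) (by rw [Real.dist_eq, abs_lt]; constructor <;> linarith)
  have a2 := @hd' (x0 + d/2) (by rw [Real.dist_eq, abs_lt]; constructor <;> linarith)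
  filter_upwards [e1, e2, e3] with n h1 h2 h3
  rw [Real.dist_eq, abs_lt] at *
  have m1 := (hfn n).1 (show x0 - d/2 ≤ x n by linarith)
  have m2 := (hfn n).1 (show x n ≤ x0 + d/2 by linarith)
  constructor <;> linarith

theorem conv_tendsto' {ω : ℝ → ℝ} (hω : IsAveragingKernel ω) {ι : Type*} {l : Filter ι}
    [l.IsCountablyGenerated] {fn : ι → ℝ → ℝ} (hfn : ∀ n, MemPsi (fn n)) {f : ℝ → ℝ} (hf : MemPsi f)
    (hlim : ∀ y, Tendsto (fun n => fn n y) l (nhds (f y)))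
    {x : ι → ℝ} {x0 : ℝ} (hx : Tendsto x l (nhds x0)) :
    Tendsto (fun n => conv (fn n) ω (x n)) l (nhds (conv f ω x0)) := by
  apply conv_tendsto hω hfn
  filter_upwards [ae_contAt hf x0] with t ht
  exact mono_tendsto_at hfn hlim (hx.sub_const t) ht

theorem conv_cont {ω f : ℝ → ℝ} (hω : IsAveragingKernel ω) (hf : MemPsi f) :
    Continuous (conv f ω) := by
  rw [continuous_iff_continuousAt]
  intro x0
  exact conv_tendsto' hω (fn := fun _ => f) (fun _ => hf) hf (fun _ => tendsto_const_nhds) tendsto_id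

theorem conv_atBot {ω f : ℝ → ℝ} (hω : IsAveragingKernel ω) (hf : MemPsi f) {a : ℝ}
    (h : Tendsto f atBot (nhds a)) : Tendsto (conv f ω) atBot (nhds a) := by
  have := conv_tendsto (l := atBot) hω (fn := fun _ : ℝ => f) (fun _ => hf) (f := fun _ => a) (x := fun x => x) (x0 := 0)
    (Eventually.of_forall fun t => h.comp (tendsto_atBot_add_const_right _ (-t) tendsto_id))
  rwa [conv_const hω] at this

theorem conv_atTop {ω f : ℝ → ℝ} (hω : IsAveragingKernel ω) (hf : MemPsi f) {a : ℝ}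
    (h : Tendsto f atTop (nhds a)) : Tendsto (conv f ω) atTop (nhds a) := by
  have := conv_tendsto (l := atTop) hω (fn := fun _ : ℝ => f) (fun _ => hf) (f := fun _ => a) (x := fun x => x) (x0 := 0)
    (Eventually.of_forall fun t => h.comp (tendsto_atTop_add_const_right _ (-t) tendsto_id))
  rwa [conv_const hω] at this

theorem conv_congr_ae {ω f g : ℝ → ℝ} (h : f =ᵐ[volume] g) (x : ℝ) : conv f ω x = conv g ω x := by
  unfold conv
  apply integral_congr_ae
  filter_upwards [h] with t ht
  rw [ht]

theorem conv_shift (f ω : ℝ → ℝ) (c x : ℝ) : conv (fun y => f (y + c)) ω x = conv f ω (x + c) := by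
  simp only [conv_eq]
  congr 1; ext t; rw [show x - t + c = x + c - t by ring]

theorem conv_refl {ω : ℝ → ℝ} (hω : IsAveragingKernel ω) {f : ℝ → ℝ} (hf : MemPsi f) (x : ℝ) :
    conv (fun y => 1 - f (-y)) ω x = 1 - conv f ω (-x) := by
  simp only [conv_eq]
  have h1 : ∫ t, f (-x - t) * ω t = ∫ t, f (-(x - t)) * ω t := by
    rw [← integral_neg_eq_self]
    congr 1; ext t; rw [hω.1]; congr 2; ring
  have hi : Integrable (fun t => f (-(x - t)) * ω t) := by
    have := (psi_int hω hf (-x)).comp_neg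
    refine this.congr (Eventually.of_forall fun t => ?_)
    simp only [hω.1]; congr 2; ring
  have h3 := integral_sub hω.2.2.2.1 hi
  rw [hω.2.2.2.2] at h3
  rw [h1, ← h3]
  congr 1; ext t; ring

theorem psi_refl {f : ℝ → ℝ} (hf : MemPsi f) : MemPsi (fun y => 1 - f (-y)) := by
  refine ⟨fun a b hab => ?_, fun x => ?_⟩
  · have := hf.1 (neg_le_neg hab); simp only; linarith
  · have := hf.2 (-x); constructor <;> linarith [this.1, this.2]

theorem psi_shift {f : ℝ → ℝ} (hf : MemPsi f) (c : ℝ) : MemPsi (fun y => f (y + c)) :=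
  ⟨fun _ _ hab => hf.1 (by linarith), fun _ => hf.2 _⟩

theorem lm_le {h : ℝ → ℝ} {u c : ℝ} (hc : 0 ≤ c) (H : ∀ u', 0 ≤ u' → u' < u → h u' ≤ c) :
    lm h u ≤ c := by
  unfold lm
  split_ifs with h0
  · exact hc
  · apply csSup_le ((nonempty_Ico.2 (not_le.1 h0)).image h)
    rintro _ ⟨u', hu', rfl⟩
    exact H u' hu'.1 hu'.2

theorem le_rm {h : ℝ → ℝ} {u c : ℝ} (hc : c ≤ 1) (H : ∀ u', u < u' → u' ≤ 1 → c ≤ h u') :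
    c ≤ rm h u := by
  unfold rm
  split_ifs with h0
  · exact hc
  · apply le_csInf ((nonempty_Ioc.2 (not_le.1 h0)).image h)
    rintro _ ⟨u', hu', rfl⟩
    exact H u' hu'.1 hu'.2

theorem le_lm {h : ℝ → ℝ} (hh : MemX h) {u u' : ℝ} (h0 : 0 ≤ u') (hu : u' < u) (h1 : u ≤ 1) :
    h u' ≤ lm h u := by
  unfold lm
  rw [if_neg (by linarith)]
  apply le_csSup
  · refine ⟨1, ?_⟩
    rintro _ ⟨x, hx, rfl⟩
    exact (hh.2 ⟨hx.1, hx.2.le.trans h1⟩).2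
  · exact ⟨u', ⟨h0, hu⟩, rfl⟩

theorem rm_le {h : ℝ → ℝ} (hh : MemX h) {u u' : ℝ} (h0 : 0 ≤ u) (hu : u < u') (h1 : u' ≤ 1) :
    rm h u ≤ h u' := by
  unfold rm
  rw [if_neg (by linarith)]
  apply csInf_le
  · refine ⟨0, ?_⟩
    rintro _ ⟨x, hx, rfl⟩
    exact (hh.2 ⟨h0.trans hx.1.le, hx.2⟩).1
  · exact ⟨u', ⟨hu, h1⟩, rfl⟩

theorem lm_nonneg {h : ℝ → ℝ} (hh : MemX h) {u : ℝ} (h1 : u ≤ 1) : 0 ≤ lm h u := by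
  rcases le_or_gt u 0 with h0 | h0
  · unfold lm; rw [if_pos h0]
  · exact (hh.2 ⟨le_rfl, zero_le_one⟩).1.trans (le_lm hh le_rfl h0 h1)

theorem rm_le_one {h : ℝ → ℝ} (hh : MemX h) {u : ℝ} (h0 : 0 ≤ u) : rm h u ≤ 1 := by
  rcases le_or_gt 1 u with h1 | h1
  · unfold rm; rw [if_pos h1]
  · exact (rm_le hh h0 h1 le_rfl).trans (hh.2 ⟨zero_le_one, le_rfl⟩).2

theorem lm_le_self {h : ℝ → ℝ} (hh : MemX h) {u : ℝ} (hu : u ∈ Icc (0:ℝ) 1) : lm h u ≤ h u :=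
  lm_le (hh.2 hu).1 fun _ h0 h1 => hh.1 ⟨h0, h1.le.trans hu.2⟩ hu h1.le

theorem self_le_rm {h : ℝ → ℝ} (hh : MemX h) {u : ℝ} (hu : u ∈ Icc (0:ℝ) 1) : h u ≤ rm h u :=
  le_rm (hh.2 hu).2 fun _ h0 h1 => hh.1 hu ⟨hu.1.trans h0.le, h1⟩ h0.le

theorem exists_of_lt_lm {h : ℝ → ℝ} {u c : ℝ} (hc : 0 ≤ c) (H : c < lm h u) :
    ∃ u', 0 ≤ u' ∧ u' < u ∧ c < h u' := by
  by_contra hcon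
  push Not at hcon
  exact absurd (lm_le hc hcon) (not_le.2 H)

theorem exists_of_rm_lt {h : ℝ → ℝ} {u c : ℝ} (hc : c ≤ 1) (H : rm h u < c) :
    ∃ u', u < u' ∧ u' ≤ 1 ∧ h u' < c := by
  by_contra hcon
  push Not at hcon
  exact absurd (le_rm hc hcon) (not_le.2 H)

theorem lm_zero (h : ℝ → ℝ) : lm h 0 = 0 := by unfold lm; simp
theorem rm_one (h : ℝ → ℝ) : rm h 1 = 1 := by unfold rm; simp

/-! Xinv -/
theorem Xinv_bdd (h : ℝ → ℝ) (v : ℝ) : BddBelow ({1} ∪ {u ∈ Icc (0:ℝ) 1 | v ≤ h u}) := by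
  refine ⟨0, ?_⟩
  rintro x (hx | hx)
  · rw [mem_singleton_iff.1 hx]; exact zero_le_one
  · exact hx.1.1

theorem Xinv_le {h : ℝ → ℝ} {u v : ℝ} (hu : u ∈ Icc (0:ℝ) 1) (H : v ≤ h u) : Xinv h v ≤ u :=
  csInf_le (Xinv_bdd h v) (Or.inr ⟨hu, H⟩)

theorem Xinv_le_one (h : ℝ → ℝ) (v : ℝ) : Xinv h v ≤ 1 :=
  csInf_le (Xinv_bdd h v) (Or.inl rfl)

theorem Xinv_nonneg (h : ℝ → ℝ) (v : ℝ) : 0 ≤ Xinv h v := by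
  refine le_csInf ⟨1, Or.inl rfl⟩ ?_
  rintro x (hx | hx)
  · rw [mem_singleton_iff.1 hx]; exact zero_le_one
  · exact hx.1.1

theorem le_Xinv {h : ℝ → ℝ} (hh : MemX h) {u v : ℝ} (hu : u ∈ Icc (0:ℝ) 1) (H : h u < v) :
    u ≤ Xinv h v := by
  refine le_csInf ⟨1, Or.inl rfl⟩ ?_
  rintro x (hx | hx)
  · rw [mem_singleton_iff.1 hx]; exact hu.2
  · by_contra hc
    exact absurd (hh.1 hx.1 hu (not_le.1 hc).le) (not_le.2 (H.trans_le hx.2))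

theorem Xinv_mono (h : ℝ → ℝ) : Monotone (Xinv h) := by
  intro a b hab
  apply csInf_le_csInf (Xinv_bdd h a) ⟨1, Or.inl rfl⟩
  apply union_subset_union_right
  exact fun x hx => ⟨hx.1, hab.trans hx.2⟩

theorem Xinv_ii (h : ℝ → ℝ) (a b : ℝ) : IntervalIntegrable (Xinv h) volume a b :=
  (Xinv_mono h).intervalIntegrable

theorem Xinv_ge_of_lm {h : ℝ → ℝ} (hh : MemX h) {v x : ℝ} (hv : v ≤ 1) (H : lm h v < x) :
    v ≤ Xinv h x := by
  rcases le_or_gt v 0 with h0 | h0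
  · exact h0.trans (Xinv_nonneg _ _)
  apply le_of_forall_lt
  intro w hw
  have hm : max 0 ((w+v)/2) < v := max_lt h0 (by linarith)
  have h1 := le_lm hh (le_max_left 0 ((w+v)/2)) hm hv
  have h2 := le_Xinv hh ⟨le_max_left 0 ((w+v)/2), hm.le.trans hv⟩ (h1.trans_lt H)
  have := le_max_right 0 ((w+v)/2)
  linarith

theorem Xinv_le_of_rm {h : ℝ → ℝ} (hh : MemX h) {v x : ℝ} (hv : 0 ≤ v) (H : x ≤ rm h v) :
    Xinv h x ≤ v := by
  rcases le_or_gt 1 v with h0 | h0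
  · exact (Xinv_le_one _ _).trans h0
  apply le_of_forall_gt
  intro w hw
  have hm : v < min 1 ((w+v)/2) := lt_min h0 (by linarith)
  have h1 := rm_le hh hv hm (min_le_left _ _)
  have h2 := Xinv_le ⟨hv.trans hm.le, min_le_left _ _⟩ (H.trans h1)
  have := min_le_right 1 ((w+v)/2)
  linarith

theorem young {h : ℝ → ℝ} (hh : MemX h) {u0 v0 u : ℝ} (hv : v0 ∈ Icc (0:ℝ) 1)
    (H : u0 ∈ Icc (lm h v0) (rm h v0)) : v0 * (u - u0) ≤ ∫ x in u0..u, Xinv h x := by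
  rcases le_total u0 u with hu | hu
  · have : ∫ x in u0..u, v0 ≤ ∫ x in u0..u, Xinv h x := by
      apply intervalIntegral.integral_mono_on_of_le_Ioo hu intervalIntegrable_const (Xinv_ii _ _ _)
      intro x hx
      exact Xinv_ge_of_lm hh hv.2 (H.1.trans_lt hx.1)
    simpa [mul_comm] using this
  · have : ∫ x in u..u0, Xinv h x ≤ ∫ x in u..u0, v0 := by
      apply intervalIntegral.integral_mono_on_of_le_Ioo hu (Xinv_ii _ _ _) intervalIntegrable_const
      intro x hx
      exact Xinv_le_of_rm hh hv.1 (hx.2.le.trans H.2)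
    rw [intervalIntegral.integral_symm]
    simp at this
    linarith

theorem desc_rm {h : ℝ → ℝ} (hh : MemX h) {u0 v0 : ℝ} (hu : u0 ≤ 1) (hv : 0 ≤ v0)
    (H : rm h v0 < u0) : ∃ c0, c0 < u0 ∧ ∀ c, c0 ≤ c → c < u0 →
      (∫ x in (0:ℝ)..c, Xinv h x) - c * v0 < (∫ x in (0:ℝ)..u0, Xinv h x) - u0 * v0 := by
  obtain ⟨v', h1, h2, h3⟩ := exists_of_rm_lt hu H
  refine ⟨h v', h3, fun c hc1 hc2 => ?_⟩
  have : ∫ x in c..u0, v' ≤ ∫ x in c..u0, Xinv h x := by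
    apply intervalIntegral.integral_mono_on_of_le_Ioo hc2.le intervalIntegrable_const (Xinv_ii _ _ _)
    intro x hx
    exact le_Xinv hh ⟨by linarith, h2⟩ (hc1.trans_lt hx.1)
  simp at this
  have h4 := intervalIntegral.integral_add_adjacent_intervals (Xinv_ii h 0 c) (Xinv_ii h c u0)
  nlinarith

theorem desc_lm {h : ℝ → ℝ} {u0 v0 : ℝ} (hu : 0 ≤ u0) (hv : v0 ≤ 1)
    (H : u0 < lm h v0) : ∃ c0, u0 < c0 ∧ ∀ c, u0 < c → c ≤ c0 →
      (∫ x in (0:ℝ)..c, Xinv h x) - c * v0 < (∫ x in (0:ℝ)..u0, Xinv h x) - u0 * v0 := by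
  obtain ⟨v', h1, h2, h3⟩ := exists_of_lt_lm hu H
  refine ⟨h v', h3, fun c hc1 hc2 => ?_⟩
  have : ∫ x in u0..c, Xinv h x ≤ ∫ x in u0..c, v' := by
    apply intervalIntegral.integral_mono_on_of_le_Ioo hc1.le (Xinv_ii _ _ _) intervalIntegrable_const
    intro x hx
    exact Xinv_le ⟨h1, by linarith⟩ (hx.2.le.trans hc2)
  simp at this
  have h4 := intervalIntegral.integral_add_adjacent_intervals (Xinv_ii h 0 u0) (Xinv_ii h u0 c)
  nlinarith

/-- local minimum implies generalized graph membership -/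
theorem min_mem {h : ℝ → ℝ} (hh : MemX h) {u0 v0 a b : ℝ} (hv : v0 ∈ Icc (0:ℝ) 1)
    (hu : u0 ∈ Icc (0:ℝ) 1) (ha : a < u0) (hb : u0 < b)
    (H : ∀ u ∈ Icc (0:ℝ) 1, a < u → u < b → (∫ x in (0:ℝ)..u0, Xinv h x) - u0 * v0 ≤
      (∫ x in (0:ℝ)..u, Xinv h x) - u * v0) : u0 ∈ Icc (lm h v0) (rm h v0) := by
  constructor
  · by_contra hc
    obtain ⟨c0, h1, h2⟩ := desc_lm hu.1 hv.2 (not_le.1 hc)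
    have hl : lm h v0 ≤ 1 := lm_le zero_le_one fun u' h0 h1 => (hh.2 ⟨h0, h1.le.trans hv.2⟩).2
    have hlt : u0 < 1 := (not_le.1 hc).trans_le hl
    obtain ⟨c, hc1, hc2⟩ := exists_between (lt_min h1 (lt_min hlt hb))
    simp only [lt_min_iff] at hc2
    have h3 := h2 c hc1 hc2.1.le
    have := H c ⟨hu.1.trans hc1.le, hc2.2.1.le⟩ (ha.trans hc1) hc2.2.2
    linarith
  · by_contra hc
    obtain ⟨c0, h1, h2⟩ := desc_rm hh hu.2 hv.1 (not_le.1 hc)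
    have hl : 0 ≤ rm h v0 := le_rm zero_le_one fun u' h0 h1 => (hh.2 ⟨hv.1.trans h0.le, h1⟩).1
    have hlt : 0 < u0 := hl.trans_lt (not_le.1 hc)
    obtain ⟨c, hc1, hc2⟩ := exists_between (max_lt h1 (max_lt hlt ha))
    simp only [max_lt_iff] at hc1
    have h3 := h2 c hc1.1.le hc2
    have := H c ⟨hc1.2.1.le, hc2.le.trans hu.2⟩ hc1.2.2 (hc2.trans hb)
    linarith

/-! potential -/
theorem Pot_swap (hf hg : ℝ → ℝ) (u v : ℝ) : Pot hf hg u v = Pot hg hf v u := by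
  unfold Pot; ring

theorem cross_swap {hf hg : ℝ → ℝ} {u v : ℝ} (h : IsCrossing hf hg u v) : IsCrossing hg hf v u :=
  ⟨h.2.1, h.1, h.2.2.2, h.2.2.1⟩

theorem gap_swap {hf hg : ℝ → ℝ} (h : StrictPosGap hf hg) : StrictPosGap hg hf := by
  obtain ⟨⟨u, v, h1, h2, h3⟩, h4⟩ := h
  refine ⟨⟨v, u, cross_swap h1, fun h => h2 h.symm, fun h => h3 h.symm⟩, fun u v hc h5 h6 => ?_⟩
  have := h4 v u (cross_swap hc) (fun h => h5 h.symm) (fun h => h6 h.symm)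
  rwa [Pot_swap, Agap, Pot_swap] at this

theorem Pot_cont (hf hg : ℝ → ℝ) : Continuous (fun p : ℝ × ℝ => Pot hf hg p.1 p.2) := by
  unfold Pot
  have h1 : Continuous (fun u => ∫ x in (0:ℝ)..u, Xinv hg x) :=
    intervalIntegral.continuous_primitive (fun a b => Xinv_ii hg a b) 0
  have h2 : Continuous (fun u => ∫ x in (0:ℝ)..u, Xinv hf x) :=
    intervalIntegral.continuous_primitive (fun a b => Xinv_ii hf a b) 0
  exact ((h1.comp continuous_fst).add (h2.comp continuous_snd)).sub (continuous_fst.mul continuous_snd)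

theorem cross_int1 {hf hg : ℝ → ℝ} (hhg : MemX hg) (hgap : StrictPosGap hf hg)
    {u v : ℝ} (hc : IsCrossing hf hg u v) (h0 : ¬(u = 0 ∧ v = 0)) (h1 : ¬(u = 1 ∧ v = 1)) :
    0 < v ∧ v < 1 := by
  have hP := hgap.2 u v hc h0 h1
  have hP0 := (le_max_left _ _).trans_lt hP
  have hP1 := (le_max_right _ _).trans_lt hP
  constructor
  · refine lt_of_le_of_ne hc.2.1.1 fun hv => ?_
    subst hv
    have := young hhg (u := 0) ⟨le_rfl, zero_le_one⟩ hc.2.2.1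
    rw [intervalIntegral.integral_symm] at this
    unfold Pot at hP0
    simp at hP0
    linarith
  · refine lt_of_le_of_ne hc.2.1.2 fun hv => ?_
    subst hv
    have := young hhg (u := 1) ⟨zero_le_one, le_rfl⟩ hc.2.2.1
    unfold Agap Pot at hP1
    have h4 := intervalIntegral.integral_add_adjacent_intervals (Xinv_ii hg 0 u) (Xinv_ii hg u 1)
    linarith

theorem pot_pos {hf hg : ℝ → ℝ} (hhf : MemX hf) (hhg : MemX hg) (hgap : StrictPosGap hf hg)
    {us vs : ℝ} (hc : IsCrossing hf hg us vs) (h0 : ¬(us = 0 ∧ vs = 0)) (h1 : ¬(us = 1 ∧ vs = 1))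
    {u v : ℝ} (hu : u ∈ Icc (0:ℝ) 1) (hv0 : 0 < v) (hv1 : v ≤ vs) : 0 < Pot hf hg u v := by
  by_contra hneg
  have hneg := not_lt.1 hneg
  have hvs := cross_int1 hhg hgap hc h0 h1
  have hcpt : IsCompact (Icc (0:ℝ) 1 ×ˢ Icc (0:ℝ) vs) := isCompact_Icc.prod isCompact_Icc
  obtain ⟨⟨u1, v1⟩, hm1, hm2⟩ := hcpt.exists_isMinOn ⟨(u,v), ⟨hu, ⟨hv0.le, hv1⟩⟩⟩ (Pot_cont hf hg).continuousOn
  have hmin : ∀ u' ∈ Icc (0:ℝ) 1, ∀ v' ∈ Icc (0:ℝ) vs, Pot hf hg u1 v1 ≤ Pot hf hg u' v' :=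
    fun u' hu' v' hv' => hm2 (⟨hu', hv'⟩ : (u', v') ∈ Icc (0:ℝ) 1 ×ˢ Icc (0:ℝ) vs)
  obtain ⟨u0, v0, hu0, hv0', hle, hmin⟩ : ∃ u0 v0, u0 ∈ Icc (0:ℝ) 1 ∧ v0 ∈ Ioc (0:ℝ) vs ∧ Pot hf hg u0 v0 ≤ 0 ∧
      ∀ u' ∈ Icc (0:ℝ) 1, ∀ v' ∈ Icc (0:ℝ) vs, Pot hf hg u0 v0 ≤ Pot hf hg u' v' := by
    rcases eq_or_lt_of_le (hm1.2.1 : (0:ℝ) ≤ v1) with h | h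
    · refine ⟨u, v, hu, ⟨hv0, hv1⟩, hneg, fun u' hu' v' hv' => ?_⟩
      refine hneg.trans (le_trans ?_ (hmin u' hu' v' hv'))
      rw [show v1 = 0 from h.symm]
      unfold Pot
      simp only [intervalIntegral.integral_same, mul_zero]
      have : 0 ≤ ∫ x in (0:ℝ)..u1, Xinv hg x := intervalIntegral.integral_nonneg hm1.1.1 fun x _ => Xinv_nonneg _ _
      linarith
    · exact ⟨u1, v1, hm1.1, ⟨h, hm1.2.2⟩, (hmin u hu v ⟨hv0.le, hv1⟩).trans hneg, hmin⟩
  have hv01 : v0 ∈ Icc (0:ℝ) 1 := ⟨hv0'.1.le, hv0'.2.trans hvs.2.le⟩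
  rcases eq_or_lt_of_le hv0'.2 with h | h
  · have hP := (le_max_left _ _).trans_lt (hgap.2 us vs hc h0 h1)
    have hy := young hhg (u := u0) hc.2.1 hc.2.2.1
    subst h
    unfold Pot at hP hle
    have h4 := intervalIntegral.integral_add_adjacent_intervals (Xinv_ii hg 0 us) (Xinv_ii hg us u0)
    linarith
  · have c1 : u0 ∈ Icc (lm hg v0) (rm hg v0) := by
      apply min_mem hhg hv01 hu0 (show u0 - 1 < u0 by linarith) (show u0 < u0 + 1 by linarith)
      intro u' hu' _ _
      have := hmin u' hu' v0 ⟨hv0'.1.le, h.le⟩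
      unfold Pot at this
      linarith
    have c2 : v0 ∈ Icc (lm hf u0) (rm hf u0) := by
      apply min_mem hhf hu0 hv01 hv0'.1 h
      intro v' hv' h5 h6
      have := hmin u0 hu0 v' ⟨hv'.1, h6.le⟩
      unfold Pot at this
      linarith
    have := hgap.2 u0 v0 ⟨hu0, hv01, c1, c2⟩ (fun h => hv0'.1.ne' h.2) (fun h' => by linarith [h'.2, hvs.2])
    have := (le_max_left _ _).trans_lt this
    linarith

theorem rm_hg_zero {hf hg : ℝ → ℝ} (hhf : MemX hf) (hhg : MemX hg) (hgap : StrictPosGap hf hg) :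
    rm hg 0 = 0 := by
  by_contra hne
  have hl : 0 ≤ rm hg 0 := le_rm zero_le_one fun u' h0 h1 => (hhg.2 ⟨h0.le, h1⟩).1
  have hpos : 0 < rm hg 0 := lt_of_le_of_ne hl (Ne.symm hne)
  have hle1 : rm hg 0 ≤ 1 := rm_le_one hhg le_rfl
  obtain ⟨⟨us, vs, hc, h0, h1⟩, _⟩ := id hgap
  have hvs := cross_int1 hhg hgap hc h0 h1
  by_cases hex : ∃ u, 0 ≤ u ∧ u < rm hg 0 ∧ 0 < hf u
  · obtain ⟨u, hu0, hu1, hu2⟩ := hex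
    set c := (u + rm hg 0)/2 with hcdef
    have hcm : c ∈ Icc (0:ℝ) 1 := ⟨by linarith, by linarith⟩
    have hmv : 0 < min (hf u) vs := lt_min hu2 hvs.1
    have hp := pot_pos hhf hhg hgap hc h0 h1 hcm hmv (min_le_right _ _)
    have e1 : ∫ x in (0:ℝ)..c, Xinv hg x ≤ ∫ x in (0:ℝ)..c, (0:ℝ) := by
      apply intervalIntegral.integral_mono_on_of_le_Ioo hcm.1 (Xinv_ii _ _ _) intervalIntegrable_const
      intro x hx
      exact Xinv_le_of_rm hhg le_rfl (by linarith [hx.2])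
    have e2 : ∫ x in (0:ℝ)..min (hf u) vs, Xinv hf x ≤ ∫ x in (0:ℝ)..min (hf u) vs, u := by
      apply intervalIntegral.integral_mono_on_of_le_Ioo hmv.le (Xinv_ii _ _ _) intervalIntegrable_const
      intro x hx
      exact Xinv_le ⟨hu0, by linarith⟩ (hx.2.le.trans (min_le_left _ _))
    unfold Pot at hp
    simp only [intervalIntegral.integral_const, smul_eq_mul, mul_zero] at e1 e2
    nlinarith
  · push Not at hex
    have hcr : IsCrossing hf hg (rm hg 0 / 2) 0 := by
      refine ⟨⟨by linarith, by linarith⟩, ⟨le_rfl, zero_le_one⟩, ⟨?_, by linarith⟩, ?_, ?_⟩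
      · rw [lm_zero]; linarith
      · exact lm_le le_rfl fun u' h3 h4 => hex u' h3 (by linarith)
      · exact le_rm zero_le_one fun u' h3 h4 => (hhf.2 ⟨by linarith, h4⟩).1
    have := cross_int1 hhg hgap hcr (fun h => by linarith [h.1]) (fun h => by linarith [h.2])
    exact absurd this.1 (lt_irrefl _)

def hr (h : ℝ → ℝ) (u : ℝ) : ℝ := 1 - h (1 - u)

theorem hr_hr (h : ℝ → ℝ) : hr (hr h) = h := by ext u; simp [hr]

theorem hr_memX {h : ℝ → ℝ} (hh : MemX h) : MemX (hr h) := by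
  constructor
  · intro a ha b hb hab
    have := hh.1 (show 1 - b ∈ Icc (0:ℝ) 1 from ⟨by linarith [hb.2], by linarith [hb.1]⟩)
      (show 1 - a ∈ Icc (0:ℝ) 1 from ⟨by linarith [ha.2], by linarith [ha.1]⟩) (by linarith)
    simp only [hr]; linarith
  · intro a ha
    have := hh.2 (show 1 - a ∈ Icc (0:ℝ) 1 from ⟨by linarith [ha.2], by linarith [ha.1]⟩)
    simp only [hr]; constructor <;> linarith [this.1, this.2]

theorem lm_hr {h : ℝ → ℝ} (hh : MemX h) {u : ℝ} (hu : u ∈ Icc (0:ℝ) 1) :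
    lm (hr h) u = 1 - rm h (1 - u) := by
  apply le_antisymm
  · apply lm_le
    · linarith [rm_le_one hh (show 0 ≤ 1 - u by linarith [hu.2])]
    · intro u' h0 h1
      have := rm_le hh (show 0 ≤ 1 - u by linarith [hu.2]) (show 1 - u < 1 - u' by linarith) (by linarith)
      simp only [hr]; linarith
  · have : 1 - lm (hr h) u ≤ rm h (1 - u) := by
      apply le_rm
      · linarith [lm_nonneg (hr_memX hh) hu.2]
      · intro u' h0 h1
        have := le_lm (hr_memX hh) (u' := 1 - u') (by linarith) (show 1 - u' < u by linarith) hu.2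
        simp only [hr, sub_sub_cancel] at this
        linarith
    linarith

theorem rm_hr {h : ℝ → ℝ} (hh : MemX h) {u : ℝ} (hu : u ∈ Icc (0:ℝ) 1) :
    rm (hr h) u = 1 - lm h (1 - u) := by
  have := lm_hr (hr_memX hh) (u := 1 - u) ⟨by linarith [hu.2], by linarith [hu.1]⟩
  rw [hr_hr, sub_sub_cancel] at this
  linarith

theorem interlace_ae {P R : ℝ → ℝ} (hP : Monotone P) (h1 : ∀ v, P v ≤ R v)
    (h2 : ∀ v v', v < v' → R v ≤ P v') : R =ᵐ[volume] P := by
  have : ∀ᵐ v, ContinuousAt P v := hP.countable_not_continuousAt.measure_zero volume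
  filter_upwards [this] with v hv
  apply le_antisymm _ (h1 v)
  have ht : Tendsto P (nhdsWithin v (Ioi v)) (nhds (P v)) := hv.tendsto.mono_left nhdsWithin_le_nhds
  refine ge_of_tendsto ht ?_
  filter_upwards [self_mem_nhdsWithin] with y hy
  exact h2 v y hy

theorem Xinv_hr_ae {h : ℝ → ℝ} (hh : MemX h) :
    (fun v => 1 - Xinv h (1 - v)) =ᵐ[volume] Xinv (hr h) := by
  apply interlace_ae (Xinv_mono _)
  · intro v
    apply le_of_forall_lt
    intro x hx
    rcases lt_or_ge x 0 with h0 | h0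
    · linarith [Xinv_le_one h (1 - v)]
    obtain ⟨y, hy1, hy2⟩ := exists_between hx
    have hy1' : y ≤ 1 := hy2.le.trans (Xinv_le_one _ _)
    have : hr h y < v := by
      by_contra hc
      exact absurd (Xinv_le ⟨by linarith, hy1'⟩ (not_lt.1 hc)) (not_le.2 hy2)
    have := Xinv_le (h := h) (u := 1 - y) (v := 1 - v) ⟨by linarith, by linarith⟩ (by simp only [hr] at this; linarith)
    linarith
  · intro v v' hvv
    apply le_of_forall_gt
    intro x hx
    rcases lt_or_ge 1 x with h0 | h0
    · linarith [Xinv_nonneg h (1 - v)]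
    obtain ⟨y, hy1, hy2⟩ := exists_between hx
    have hy0 : 0 ≤ y := (Xinv_nonneg _ _).trans hy1.le
    have hy : v' ≤ hr h y := by
      by_contra hc
      exact absurd (le_Xinv (hr_memX hh) ⟨hy0, by linarith⟩ (not_le.1 hc)) (not_le.2 hy1)
    have := le_Xinv hh (u := 1 - y) (v := 1 - v) ⟨by linarith, by linarith⟩ (by simp only [hr] at hy; linarith)
    linarith

theorem int_hr {h : ℝ → ℝ} (hh : MemX h) (u : ℝ) :
    ∫ x in (0:ℝ)..u, Xinv (hr h) x = u - ((∫ x in (0:ℝ)..1, Xinv h x) - ∫ x in (0:ℝ)..(1-u), Xinv h x) := by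
  have : ∫ x in (0:ℝ)..u, Xinv (hr h) x = ∫ x in (0:ℝ)..u, (1 - Xinv h (1 - x)) := by
    apply intervalIntegral.integral_congr_ae
    filter_upwards [Xinv_hr_ae hh] with v hv _
    exact hv.symm
  rw [this, intervalIntegral.integral_sub intervalIntegrable_const,
    intervalIntegral.integral_comp_sub_left (fun x => Xinv h x)]
  · have h4 := intervalIntegral.integral_add_adjacent_intervals (Xinv_ii h 0 (1-u)) (Xinv_ii h (1-u) 1)
    simp only [intervalIntegral.integral_const, smul_eq_mul, sub_zero, mul_one]
    linarith
  · apply Antitone.intervalIntegrable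
    intro a b hab
    exact Xinv_mono h (by linarith)

theorem Pot_hr {hf hg : ℝ → ℝ} (hhf : MemX hf) (hhg : MemX hg) (u v : ℝ) :
    Pot (hr hf) (hr hg) u v = Pot hf hg (1 - u) (1 - v) - Agap hf hg := by
  unfold Agap Pot
  rw [int_hr hhf, int_hr hhg]
  ring

theorem Agap_hr {hf hg : ℝ → ℝ} (hhf : MemX hf) (hhg : MemX hg) :
    Agap (hr hf) (hr hg) = - Agap hf hg := by
  rw [Agap, Pot_hr hhf hhg]
  simp [Pot]

theorem cross_hr {hf hg : ℝ → ℝ} (hhf : MemX hf) (hhg : MemX hg) {u v : ℝ}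
    (h : IsCrossing hf hg u v) : IsCrossing (hr hf) (hr hg) (1 - u) (1 - v) := by
  obtain ⟨h1, h2, h3, h4⟩ := h
  have h1' : 1 - u ∈ Icc (0:ℝ) 1 := ⟨by linarith [h1.2], by linarith [h1.1]⟩
  have h2' : 1 - v ∈ Icc (0:ℝ) 1 := ⟨by linarith [h2.2], by linarith [h2.1]⟩
  refine ⟨h1', h2', ?_, ?_⟩
  · rw [lm_hr hhg h2', rm_hr hhg h2', sub_sub_cancel]
    exact ⟨by linarith [h3.2], by linarith [h3.1]⟩
  · rw [lm_hr hhf h1', rm_hr hhf h1', sub_sub_cancel]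
    exact ⟨by linarith [h4.2], by linarith [h4.1]⟩

theorem gap_hr {hf hg : ℝ → ℝ} (hhf : MemX hf) (hhg : MemX hg) (h : StrictPosGap hf hg) :
    StrictPosGap (hr hf) (hr hg) := by
  obtain ⟨⟨u, v, h1, h2, h3⟩, h4⟩ := h
  refine ⟨⟨1 - u, 1 - v, cross_hr hhf hhg h1, fun h => h3 ⟨by linarith [h.1], by linarith [h.2]⟩,
    fun h => h2 ⟨by linarith [h.1], by linarith [h.2]⟩⟩, fun u v hc h5 h6 => ?_⟩
  have hc' := cross_hr (hr_memX hhf) (hr_memX hhg) hc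
  rw [hr_hr, hr_hr] at hc'
  have := h4 _ _ hc' (fun h => h6 ⟨by linarith [h.1], by linarith [h.2]⟩)
    (fun h => h5 ⟨by linarith [h.1], by linarith [h.2]⟩)
  rw [Pot_hr hhf hhg, Agap_hr hhf hhg]
  rw [max_lt_iff] at this ⊢
  constructor <;> linarith [this.1, this.2]

theorem lm_hg_one {hf hg : ℝ → ℝ} (hhf : MemX hf) (hhg : MemX hg) (hgap : StrictPosGap hf hg) :
    lm hg 1 = 1 := by
  have := rm_hg_zero (hr_memX hhf) (hr_memX hhg) (gap_hr hhf hhg hgap)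
  rw [rm_hr hhg ⟨le_rfl, zero_le_one⟩] at this
  rw [sub_zero] at this
  linarith

def qz (f : ℝ → ℝ) (v : ℝ) : ℝ := sInf {x | v ≤ f x}

theorem qz_bdd {f : ℝ → ℝ} (hf : MemPsi f) (hI : Interpolates f 0 1) {v : ℝ} (hv : v ∈ Ioo (0:ℝ) 1) :
    BddBelow {x | v ≤ f x} := by
  obtain ⟨x, hx⟩ := ((tendsto_order.1 hI.1).2 v hv.1).exists
  refine ⟨x, fun y hy => ?_⟩
  by_contra hc
  exact absurd (hf.1 (not_le.1 hc).le) (not_le.2 (hx.trans_le hy))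

theorem qz_ne {f : ℝ → ℝ} (hI : Interpolates f 0 1) {v : ℝ} (hv : v ∈ Ioo (0:ℝ) 1) :
    {x | v ≤ f x}.Nonempty := by
  obtain ⟨x, hx⟩ := ((tendsto_order.1 hI.2).1 v hv.2).exists
  exact ⟨x, hx.le⟩

theorem qz_le {f : ℝ → ℝ} (hf : MemPsi f) (hI : Interpolates f 0 1) {v x : ℝ} (hv : v ∈ Ioo (0:ℝ) 1)
    (h : v ≤ f x) : qz f v ≤ x := csInf_le (qz_bdd hf hI hv) h

theorem le_qz {f : ℝ → ℝ} (hf : MemPsi f) (hI : Interpolates f 0 1) {v x : ℝ} (hv : v ∈ Ioo (0:ℝ) 1)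
    (h : f x < v) : x ≤ qz f v := by
  apply le_csInf (qz_ne hI hv)
  intro y hy
  by_contra hc
  exact absurd (hf.1 (not_le.1 hc).le) (not_le.2 (h.trans_le hy))

theorem le_of_qz_lt {f : ℝ → ℝ} (hf : MemPsi f) (hI : Interpolates f 0 1) {v x : ℝ}
    (hv : v ∈ Ioo (0:ℝ) 1) (h : qz f v < x) : v ≤ f x := by
  by_contra hc
  exact absurd (le_qz hf hI hv (not_le.1 hc)) (not_le.2 h)

theorem lt_of_lt_qz {f : ℝ → ℝ} (hf : MemPsi f) (hI : Interpolates f 0 1) {v x : ℝ}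
    (hv : v ∈ Ioo (0:ℝ) 1) (h : x < qz f v) : f x < v := by
  by_contra hc
  exact absurd (qz_le hf hI hv (not_lt.1 hc)) (not_le.2 h)

theorem qz_monoOn {f : ℝ → ℝ} (hf : MemPsi f) (hI : Interpolates f 0 1) :
    MonotoneOn (qz f) (Ioo 0 1) := by
  intro a ha b hb hab
  exact csInf_le_csInf (qz_bdd hf hI ha) (qz_ne hI hb) fun x hx => hab.trans hx

theorem qz_aem {f : ℝ → ℝ} (hf : MemPsi f) (hI : Interpolates f 0 1) :
    AEMeasurable (qz f) (volume.restrict (Ioo 0 1)) :=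
  aemeasurable_restrict_of_monotoneOn measurableSet_Ioo (qz_monoOn hf hI)

theorem fub_inner {ω f : ℝ → ℝ} (hf : MemPsi f) (hI : Interpolates f 0 1) {v x : ℝ}
    (hv : v ∈ Ioo (0:ℝ) 1) :
    ∫ t, (if v ≤ f (x - t) then ω t else 0) = Om ω (x - qz f v) := by
  unfold Om
  rw [← integral_indicator measurableSet_Iic]
  apply integral_congr_ae
  have : ∀ᵐ t : ℝ, t ≠ x - qz f v := by
    simp [ae_iff]
  filter_upwards [this] with t ht
  by_cases h : v ≤ f (x - t)
  · have := qz_le hf hI hv h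
    rw [if_pos h, indicator_of_mem]
    rw [mem_Iic]; linarith
  · have := le_qz hf hI hv (not_le.1 h)
    rw [if_neg h, indicator_of_notMem]
    rw [mem_Iic]; intro h'
    exact ht (by linarith)

theorem fub_outer {ω f : ℝ → ℝ} (hf : MemPsi f) {x t : ℝ} :
    ∫ v in Ioo (0:ℝ) 1, (if v ≤ f (x - t) then ω t else 0) = f (x - t) * ω t := by
  have h01 := hf.2 (x - t)
  set y := f (x - t)
  have : ∫ v in Ioo (0:ℝ) 1, (if v ≤ y then ω t else 0) = ∫ v in Ioo (0:ℝ) 1, (Iic y).indicator (fun _ => ω t) v := by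
    rfl
  rw [this, setIntegral_indicator measurableSet_Iic, setIntegral_const]
  have h2 : volume.real (Ioo (0:ℝ) 1 ∩ Iic y) = y := by
    have : (Ioo (0:ℝ) 1 ∩ Iic y : Set ℝ) =ᵐ[volume] Ioc 0 y := by
      have e : ∀ᵐ t : ℝ, t ≠ 1 := by simp [ae_iff]
      filter_upwards [e] with t ht
      apply propext
      show (t ∈ Ioo (0:ℝ) 1 ∩ Iic y) ↔ t ∈ Ioc 0 y
      constructor
      · rintro ⟨a, b⟩; exact ⟨a.1, b⟩
      · rintro ⟨a, b⟩; exact ⟨⟨a, lt_of_le_of_ne (b.trans h01.2) ht⟩, b⟩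
    rw [measureReal_def, measure_congr this]
    simp [h01.1]
  rw [h2, smul_eq_mul]

theorem conv_quant {ω f : ℝ → ℝ} (hω : IsAveragingKernel ω) (hf : MemPsi f) (hI : Interpolates f 0 1)
    (x : ℝ) : conv f ω x = ∫ v in Ioo (0:ℝ) 1, Om ω (x - qz f v) := by
  have hm : MeasurableSet {p : ℝ × ℝ | p.2 ≤ f (x - p.1)} :=
    measurableSet_le measurable_snd (hf.1.measurable.comp (measurable_const.sub measurable_fst))
  have hint : Integrable (fun p : ℝ × ℝ => if p.2 ≤ f (x - p.1) then ω p.1 else 0)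
      (volume.prod (volume.restrict (Ioo (0:ℝ) 1))) := by
    have h1 : Integrable (fun p : ℝ × ℝ => ω p.1) (volume.prod (volume.restrict (Ioo (0:ℝ) 1))) :=
      Integrable.comp_fst hω.2.2.2.1 _
    have h2 := h1.indicator hm
    exact h2
  have hs := integral_integral_swap (f := fun t v => if v ≤ f (x - t) then ω t else 0) hint
  rw [conv_eq]
  simp only [fub_outer hf] at hs
  rw [hs]
  apply setIntegral_congr_fun measurableSet_Ioo
  intro v hv
  exact fub_inner hf hI hv

theorem int2 {ω F G : ℝ → ℝ} (hω : IsAveragingKernel ω) (hF : MemPsi F) (hG : MemPsi G)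
    (hFI : Interpolates F 0 1) (hGI : Interpolates G 0 1) (η : ℝ) {s t : Set ℝ}
    (hs : s ⊆ Ioo 0 1) (ht : t ⊆ Ioo 0 1) :
    Integrable (fun p : ℝ × ℝ => Om ω (qz F p.1 + η - qz G p.2))
      ((volume.restrict s).prod (volume.restrict t)) := by
  have fs : IsFiniteMeasure (volume.restrict s) :=
    ⟨by rw [Measure.restrict_apply_univ]; exact (measure_mono hs).trans_lt (by simp)⟩
  have ft : IsFiniteMeasure (volume.restrict t) :=
    ⟨by rw [Measure.restrict_apply_univ]; exact (measure_mono ht).trans_lt (by simp)⟩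
  have a1 : AEMeasurable (fun p : ℝ × ℝ => qz F p.1) ((volume.restrict s).prod (volume.restrict t)) :=
    ((qz_aem hF hFI).mono_measure (Measure.restrict_mono_set _ hs)).comp_quasiMeasurePreserving
      Measure.quasiMeasurePreserving_fst
  have a2 : AEMeasurable (fun p : ℝ × ℝ => qz G p.2) ((volume.restrict s).prod (volume.restrict t)) :=
    ((qz_aem hG hGI).mono_measure (Measure.restrict_mono_set _ ht)).comp_quasiMeasurePreserving
      Measure.quasiMeasurePreserving_snd
  apply Integrable.of_bound (C := 1)
  · exact ((Om_cont hω).measurable.comp_aemeasurable ((a1.add_const η).sub a2)).aestronglyMeasurable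
  · exact Eventually.of_forall fun p => by
      rw [Real.norm_of_nonneg (Om_nonneg hω _)]; exact Om_le_one hω _

theorem int1 {ω G : ℝ → ℝ} (hω : IsAveragingKernel ω) (hG : MemPsi G)
    (hGI : Interpolates G 0 1) (x : ℝ) {t : Set ℝ} (ht : t ⊆ Ioo 0 1) :
    IntegrableOn (fun u => Om ω (x - qz G u)) t := by
  have ft : IsFiniteMeasure (volume.restrict t) :=
    ⟨by rw [Measure.restrict_apply_univ]; exact (measure_mono ht).trans_lt (by simp)⟩
  have a2 : AEMeasurable (fun p : ℝ => qz G p) (volume.restrict t) :=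
    ((qz_aem hG hGI).mono_measure (Measure.restrict_mono_set _ ht))
  apply Integrable.of_bound (C := 1)
  · exact ((Om_cont hω).measurable.comp_aemeasurable (a2.const_sub x)).aestronglyMeasurable
  · exact Eventually.of_forall fun p => by
      rw [Real.norm_of_nonneg (Om_nonneg hω _)]; exact Om_le_one hω _

theorem conv_split {ω G : ℝ → ℝ} (hω : IsAveragingKernel ω) (hG : MemPsi G)
    (hGI : Interpolates G 0 1) {q q' ε : ℝ} (hq0 : 0 ≤ q) (hqq : q ≤ q') (hq1 : q' ≤ 1) (hε : 0 ≤ ε)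
    (x : ℝ) (e : ∀ u ∈ Ioo q' 1, Om ω (x - qz G u) ≤ ε) :
    conv G ω x ≤ (∫ u in Ioo 0 q, Om ω (x - qz G u)) + ((q' - q) + ε) := by
  rw [conv_quant hω hG hGI]
  have hle : ∫ u in Ioo (0:ℝ) 1, Om ω (x - qz G u) ≤ ∫ u in Ioo (0:ℝ) 1,
      ((Ioo 0 q).indicator (fun u => Om ω (x - qz G u)) u + ((Icc q q').indicator (fun _ => (1:ℝ)) u + ε)) := by
    apply setIntegral_mono_on (int1 hω hG hGI x subset_rfl) _ measurableSet_Ioo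
    · intro u hu
      by_cases h1 : u < q
      · rw [indicator_of_mem (show u ∈ Ioo 0 q from ⟨hu.1, h1⟩)]
        have : 0 ≤ (Icc q q').indicator (fun _ => (1:ℝ)) u := indicator_nonneg (fun _ _ => zero_le_one) _
        linarith
      · by_cases h2 : u ≤ q'
        · rw [indicator_of_notMem (show u ∉ Ioo 0 q from fun h => h1 h.2),
            indicator_of_mem (show u ∈ Icc q q' from ⟨not_lt.1 h1, h2⟩)]
          linarith [Om_le_one hω (x - qz G u)]
        · rw [indicator_of_notMem (show u ∉ Ioo 0 q from fun h => h1 h.2),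
            indicator_of_notMem (show u ∉ Icc q q' from fun h => h2 h.2)]
          linarith [e u ⟨not_le.1 h2, hu.2⟩]
    · apply Integrable.add
      · exact (int1 hω hG hGI x subset_rfl).indicator measurableSet_Ioo
      · apply Integrable.add
        · exact (integrable_const _).indicator measurableSet_Icc
        · exact integrable_const _
  refine hle.trans (le_of_eq_of_le (integral_add ?_ ?_) ?_)
  · exact (int1 hω hG hGI x subset_rfl).indicator measurableSet_Ioo
  · apply Integrable.add
    · exact (integrable_const _).indicator measurableSet_Icc
    · exact integrable_const _
  · rw [integral_add ((integrable_const _).indicator measurableSet_Icc) (integrable_const _)]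
    rw [setIntegral_indicator measurableSet_Ioo, setIntegral_indicator measurableSet_Icc]
    have : Ioo (0:ℝ) 1 ∩ Ioo 0 q = Ioo 0 q := by
      apply inter_eq_right.2; apply Ioo_subset_Ioo_right; linarith
    rw [this]
    have h3 : ∫ u in Ioo (0:ℝ) 1 ∩ Icc q q', (1:ℝ) ≤ q' - q := by
      have : volume.real (Ioo (0:ℝ) 1 ∩ Icc q q') ≤ volume.real (Icc q q') :=
        measureReal_mono inter_subset_right (by simp)
      simpa [hqq] using this
    have h4 : ∫ u in Ioo (0:ℝ) 1, ε = ε := by simp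
    rw [h4]; linarith

theorem half {ω F G h : ℝ → ℝ} (hω : IsAveragingKernel ω) (hF : MemPsi F) (hG : MemPsi G)
    (hFI : Interpolates F 0 1) (hGI : Interpolates G 0 1) {η p q q' ε : ℝ}
    (hp0 : 0 ≤ p) (hp1 : p ≤ 1)
    (hq0 : 0 ≤ q) (hqq : q ≤ q') (hq1 : q' ≤ 1) (hε : 0 ≤ ε)
    (h1 : ∀ v ∈ Ioo 0 p, Xinv h v ≤ conv G ω (qz F v + η))
    (e : ∀ v ∈ Ioo 0 p, ∀ u ∈ Ioo q' 1, Om ω (qz F v + η - qz G u) ≤ ε) :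
    ∫ v in (0:ℝ)..p, Xinv h v ≤
      (∫ v in Ioo 0 p, ∫ u in Ioo 0 q, Om ω (qz F v + η - qz G u)) + ((q' - q) + ε) := by
  rw [intervalIntegral.integral_of_le hp0, integral_Ioc_eq_integral_Ioo]
  have hsub : Ioo 0 p ⊆ Ioo (0:ℝ) 1 := Ioo_subset_Ioo_right hp1
  have hsub2 : Ioo 0 q ⊆ Ioo (0:ℝ) 1 := Ioo_subset_Ioo_right (hqq.trans hq1)
  have hi : Integrable (fun v => ∫ u in Ioo 0 q, Om ω (qz F v + η - qz G u)) (volume.restrict (Ioo 0 p)) :=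
    (int2 hω hF hG hFI hGI η hsub hsub2).integral_prod_left
  have : ∫ v in Ioo 0 p, Xinv h v ≤ ∫ v in Ioo 0 p, ((∫ u in Ioo 0 q, Om ω (qz F v + η - qz G u)) + ((q' - q) + ε)) := by
    apply setIntegral_mono_on _ _ measurableSet_Ioo
    · intro v hv
      exact (h1 v hv).trans (conv_split hω hG hGI hq0 hqq hq1 hε _ (e v hv))
    · have := (Xinv_ii h 0 p)
      rw [intervalIntegrable_iff_integrableOn_Ioo_of_le hp0] at this
      exact this
    · exact hi.add (integrable_const _)
  refine this.trans ?_
  rw [integral_add hi (integrable_const _), setIntegral_const]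
  simp only [measureReal_def, Real.volume_Ioo, sub_zero, ENNReal.toReal_ofReal hp0, smul_eq_mul]
  have : p * (q' - q + ε) ≤ q' - q + ε := mul_le_of_le_one_left (by linarith) hp1
  linarith

theorem energy {ω F G hf hg : ℝ → ℝ} (hω : IsAveragingKernel ω) (hF : MemPsi F) (hG : MemPsi G)
    (hFI : Interpolates F 0 1) (hGI : Interpolates G 0 1) {η p p' q q' ε : ℝ}
    (hp0 : 0 ≤ p) (hpp : p ≤ p') (hp1 : p' ≤ 1)
    (hq0 : 0 ≤ q) (hqq : q ≤ q') (hq1 : q' ≤ 1) (hε : 0 ≤ ε)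
    (h1 : ∀ v ∈ Ioo 0 p, Xinv hf v ≤ conv G ω (qz F v + η))
    (h2 : ∀ u ∈ Ioo 0 q, Xinv hg u ≤ conv F ω (qz G u))
    (e1 : ∀ v ∈ Ioo 0 p, ∀ u ∈ Ioo q' 1, Om ω (qz F v + η - qz G u) ≤ ε)
    (e2 : ∀ u ∈ Ioo 0 q, ∀ v ∈ Ioo p' 1, Om ω (qz G u - qz F v) ≤ ε) :
    Pot hf hg q p ≤ kerSup ω * max η 0 + (p' - p) + (q' - q) + 2 * ε := by
  have a1 := half hω hF hG hFI hGI hp0 (hpp.trans hp1) hq0 hqq hq1 hε h1 e1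
  have a2 := half (η := 0) hω hG hF hGI hFI hq0 (hqq.trans hq1) hp0 hpp hp1 hε (by simpa using h2) (by simpa using e2)
  simp only [add_zero] at a2
  have hsub : Ioo 0 p ⊆ Ioo (0:ℝ) 1 := Ioo_subset_Ioo_right (hpp.trans hp1)
  have hsub2 : Ioo 0 q ⊆ Ioo (0:ℝ) 1 := Ioo_subset_Ioo_right (hqq.trans hq1)
  have i1 := int2 hω hF hG hFI hGI η hsub hsub2
  have i2 := int2 hω hG hF hGI hFI 0 hsub2 hsub
  simp only [add_zero] at i2
  have sw := integral_integral_swap (f := fun u v => Om ω (qz G u - qz F v)) i2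
  rw [sw] at a2
  have i3 : Integrable (fun p : ℝ × ℝ => Om ω (qz G p.2 - qz F p.1))
      ((volume.restrict (Ioo 0 p)).prod (volume.restrict (Ioo 0 q))) := i2.swap
  have key : (∫ v in Ioo 0 p, ∫ u in Ioo 0 q, Om ω (qz F v + η - qz G u)) +
      (∫ v in Ioo 0 p, ∫ u in Ioo 0 q, Om ω (qz G u - qz F v)) ≤ p * (q * (1 + kerSup ω * max η 0)) := by
    rw [← integral_add i1.integral_prod_left i3.integral_prod_left]
    have : ∫ v in Ioo 0 p, ((∫ u in Ioo 0 q, Om ω (qz F v + η - qz G u)) +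
      (∫ u in Ioo 0 q, Om ω (qz G u - qz F v))) ≤ ∫ v in Ioo 0 p, (q * (1 + kerSup ω * max η 0)) := by
      apply setIntegral_mono_on (i1.integral_prod_left.add i3.integral_prod_left) (integrable_const _) measurableSet_Ioo
      intro v hv
      have j1 := int1 hω hG hGI (qz F v + η) hsub2
      have j2 : IntegrableOn (fun u => Om ω (qz G u - qz F v)) (Ioo 0 q) := by
        have := int1 hω hG hGI (qz F v) hsub2
        have h3 : (fun u => Om ω (qz G u - qz F v)) = fun u => 1 - Om ω (qz F v - qz G u) := by
          ext u; have := Om_symm hω (qz F v - qz G u); rw [neg_sub] at this; linarith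
        rw [h3]
        exact (integrable_const _).sub this
      show (∫ u in Ioo 0 q, Om ω (qz F v + η - qz G u)) + (∫ u in Ioo 0 q, Om ω (qz G u - qz F v)) ≤ _
      rw [← integral_add j1 j2]
      have : ∫ u in Ioo 0 q, (Om ω (qz F v + η - qz G u) + Om ω (qz G u - qz F v)) ≤ ∫ u in Ioo 0 q, (1 + kerSup ω * max η 0) := by
        apply setIntegral_mono_on (j1.add j2) (integrable_const _) measurableSet_Ioo
        intro u hu
        show Om ω (qz F v + η - qz G u) + Om ω (qz G u - qz F v) ≤ _
        have s := Om_symm hω (qz F v - qz G u); rw [neg_sub] at s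
        have l := Om_lip hω (show qz F v - qz G u ≤ qz F v - qz G u + max η 0 by linarith [le_max_right η 0])
        have m := Om_mono hω (show qz F v + η - qz G u ≤ qz F v - qz G u + max η 0 by linarith [le_max_left η 0])
        rw [add_sub_cancel_left] at l
        linarith
      refine this.trans (le_of_eq ?_)
      rw [setIntegral_const]
      simp only [measureReal_def, Real.volume_Ioo, sub_zero, ENNReal.toReal_ofReal hq0, smul_eq_mul]
    refine this.trans (le_of_eq ?_)
    rw [setIntegral_const]
    simp only [measureReal_def, Real.volume_Ioo, sub_zero, ENNReal.toReal_ofReal hp0, smul_eq_mul]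
  have hpq : p * q ≤ 1 := mul_le_one₀ (hpp.trans hp1) hq0 (hqq.trans hq1)
  have hk : 0 ≤ kerSup ω * max η 0 := mul_nonneg kerSup_nonneg (le_max_right _ _)
  have : p * q * (kerSup ω * max η 0) ≤ kerSup ω * max η 0 := mul_le_of_le_one_left hk hpq
  unfold Pot
  nlinarith

theorem knaster (S : (ℝ → ℝ) → ℝ → ℝ) (h1 : ∀ f, MemPsi f → MemPsi (S f))
    (h2 : ∀ f g, MemPsi f → MemPsi g → (∀ x, f x ≤ g x) → ∀ x, S f x ≤ S g x) :
    ∃ F, MemPsi F ∧ ∀ x, S F x = F x := by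
  let T : Set (ℝ → ℝ) := {f | MemPsi f ∧ ∀ x, f x ≤ S f x}
  have h0 : (fun _ => (0:ℝ)) ∈ T :=
    ⟨psi_const ⟨le_rfl, zero_le_one⟩, fun x => ((h1 _ (psi_const ⟨le_rfl, zero_le_one⟩)).2 x).1⟩
  let F : ℝ → ℝ := fun x => sSup ((fun f : ℝ → ℝ => f x) '' T)
  have hb : ∀ x, BddAbove ((fun f : ℝ → ℝ => f x) '' T) := by
    intro x
    refine ⟨1, ?_⟩
    rintro _ ⟨f, hf, rfl⟩
    exact (hf.1.2 x).2
  have hle : ∀ f ∈ T, ∀ x, f x ≤ F x := fun f hf x => le_csSup (hb x) ⟨f, hf, rfl⟩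
  have hF : MemPsi F := by
    refine ⟨fun a b hab => ?_, fun x => ⟨hle _ h0 x, ?_⟩⟩
    · refine csSup_le ⟨_, _, h0, rfl⟩ ?_
      rintro _ ⟨f, hf, rfl⟩
      exact (hf.1.1 hab).trans (hle f hf b)
    · refine csSup_le ⟨_, _, h0, rfl⟩ ?_
      rintro _ ⟨f, hf, rfl⟩
      exact (hf.1.2 x).2
  have hFS : ∀ x, F x ≤ S F x := by
    intro x
    refine csSup_le ⟨_, _, h0, rfl⟩ ?_
    rintro _ ⟨f, hf, rfl⟩
    exact (hf.2 x).trans (h2 f F hf.1 hF (hle f hf) x)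
  have hST : S F ∈ T := ⟨h1 F hF, h2 F (S F) hF (h1 F hF) hFS⟩
  exact ⟨F, hF, fun x => le_antisymm (hle _ hST x) (hFS x)⟩

theorem psi_comp {h f : ℝ → ℝ} (hh : MemX h) (hf : MemPsi f) : MemPsi (fun x => h (f x)) :=
  ⟨fun a b hab => hh.1 (hf.2 a) (hf.2 b) (hf.1 hab), fun x => hh.2 (hf.2 x)⟩

structure Appr (ω hf hg : ℝ → ℝ) (vs δ K c : ℝ) (F G : ℝ → ℝ) : Prop where
  F_psi : MemPsi F
  G_psi : MemPsi G
  G_eq : ∀ x, G x = hg (conv F ω x)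
  F_eq : ∀ x, |x| < K → F x = hf (conv G ω ((1 + δ) * x))
  F_bot : ∀ x, x < -K → F x = 0
  F_top : ∀ x, K < x → F x = 1
  c_le : |c| ≤ K
  c_bot : ∀ x, x < c → F x ≤ vs
  c_top : ∀ x, c < x → vs ≤ F x

theorem appr_exists {ω hf hg : ℝ → ℝ} (hω : IsAveragingKernel ω) (hhf : MemX hf) (hhg : MemX hg)
    {vs δ K : ℝ} (hvs : vs ∈ Ioo (0:ℝ) 1) (hδ : 0 < δ) (hK : 0 < K) :
    ∃ c F G, Appr ω hf hg vs δ K c F G := by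
  obtain ⟨F, hF, hS⟩ := knaster
    (fun F x => if x < -K then 0 else if K ≤ x then 1 else
      hf (conv (fun y => hg (conv F ω y)) ω ((1 + δ) * x))) (by
      intro f hf'
      have hp := psi_comp hhf (conv_psi hω (psi_comp hhg (conv_psi hω hf')))
      constructor
      · intro a b hab
        simp only
        split_ifs with h1 h2 h3 h4 h5 h6 h7
        all_goals first | linarith | skip
        · exact (hp.2 _).1
        · exact (hp.2 _).2
        · exact hp.1 (by nlinarith)
      · intro x
        simp only
        split_ifs with h1 h2
        · simp
        · simp
        · exact hp.2 _) (by
      intro f g hf' hg' hfg x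
      have hp := (conv_psi hω (psi_comp hhg (conv_psi hω hf')))
      have hp' := (conv_psi hω (psi_comp hhg (conv_psi hω hg')))
      split_ifs
      · exact le_rfl
      · exact le_rfl
      · apply hhf.1 (hp.2 _) (hp'.2 _)
        apply conv_mono_of_le hω (psi_comp hhg (conv_psi hω hf')) (psi_comp hhg (conv_psi hω hg'))
        intro t
        apply hhg.1 ((conv_psi hω hf').2 _) ((conv_psi hω hg').2 _)
        exact conv_mono_of_le hω hf' hg' fun t => hfg _)
  have hb : ∀ x, x < -K → F x = 0 := fun x hx => by rw [← hS x]; simp [hx]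
  have ht : ∀ x, K ≤ x → F x = 1 := fun x hx => by
    rw [← hS x]; rw [if_neg (by linarith), if_pos hx]
  have hI : Interpolates F 0 1 := by
    constructor
    · apply tendsto_const_nhds.congr'
      filter_upwards [eventually_lt_atBot (-K)] with x hx
      exact (hb x hx).symm
    · apply tendsto_const_nhds.congr'
      filter_upwards [eventually_ge_atTop K] with x hx
      exact (ht x hx).symm
  refine ⟨qz F vs, F, fun y => hg (conv F ω y), hF, psi_comp hhg (conv_psi hω hF), fun x => rfl, ?_,
    hb, fun x hx => ht x hx.le, ?_, ?_, ?_⟩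
  · intro x hx
    rw [abs_lt] at hx
    rw [← hS x, if_neg (by linarith), if_neg (by linarith)]
  · rw [abs_le]
    constructor
    · apply le_of_forall_lt
      intro x hx
      obtain ⟨y, hy1, hy2⟩ := exists_between hx
      exact hy1.trans_le (le_qz hF hI hvs (by rw [hb y hy2]; exact hvs.1))
    · exact qz_le hF hI hvs (by rw [ht K le_rfl]; exact hvs.2.le)
  · intro x hx
    exact (lt_of_lt_qz hF hI hvs hx).le
  · intro x hx
    exact le_of_qz_lt hF hI hvs hx

theorem appr_refl {ω hf hg : ℝ → ℝ} (hω : IsAveragingKernel ω) {vs δ K c : ℝ} {F G : ℝ → ℝ}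
    (h : Appr ω hf hg vs δ K c F G) :
    Appr ω (hr hf) (hr hg) (1 - vs) δ K (-c) (fun x => 1 - F (-x)) (fun x => 1 - G (-x)) := by
  refine ⟨psi_refl h.F_psi, psi_refl h.G_psi, fun x => ?_, fun x hx => ?_, fun x hx => ?_, fun x hx => ?_,
    by rw [abs_neg]; exact h.c_le, fun x hx => ?_, fun x hx => ?_⟩
  · rw [conv_refl hω h.F_psi, hr, sub_sub_cancel, h.G_eq]
  · rw [conv_refl hω h.G_psi, hr, sub_sub_cancel, h.F_eq _ (by rwa [abs_neg]), mul_neg]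
  · rw [h.F_top _ (by linarith)]; simp
  · rw [h.F_bot _ (by linarith)]; simp
  · linarith [h.c_top (-x) (by linarith)]
  · linarith [h.c_bot (-x) (by linarith)]

/-! Helly selection -/
theorem helly_cnt (fn : ℕ → ℝ → ℝ) (hfn : ∀ n, MemPsi (fn n)) (S : Set ℝ) (hS : S.Countable) :
    ∃ φ : ℕ → ℕ, StrictMono φ ∧ ∀ x ∈ S, ∃ y, Tendsto (fun n => fn (φ n) x) atTop (nhds y) := by
  have : Countable S := hS.to_subtype
  let u : ℕ → (S → Icc (0:ℝ) 1) := fun n x => ⟨fn n x, (hfn n).2 x⟩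
  obtain ⟨a, φ, hφ, ha⟩ := CompactSpace.tendsto_subseq u
  refine ⟨φ, hφ, fun x hx => ⟨a ⟨x, hx⟩, ?_⟩⟩
  have := (tendsto_pi_nhds.1 ha) ⟨x, hx⟩
  exact (continuous_subtype_val.tendsto _).comp this

theorem helly (fn : ℕ → ℝ → ℝ) (hfn : ∀ n, MemPsi (fn n)) :
    ∃ φ : ℕ → ℕ, StrictMono φ ∧ ∃ f, MemPsi f ∧ ∀ x, Tendsto (fun n => fn (φ n) x) atTop (nhds (f x)) := by
  obtain ⟨φ, hφ, h1⟩ := helly_cnt fn hfn (range ((↑) : ℚ → ℝ)) (countable_range _)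
  have h1' : ∀ q : ℚ, ∃ y, Tendsto (fun n => fn (φ n) q) atTop (nhds y) := fun q => h1 q ⟨q, rfl⟩
  choose g hg using h1'
  have g01 : ∀ q, g q ≤ 1 := fun q => le_of_tendsto' (hg q) fun n => ((hfn _).2 _).2
  have gm : ∀ q r, q ≤ r → g q ≤ g r := fun q r hqr =>
    le_of_tendsto_of_tendsto' (hg q) (hg r) fun n => (hfn _).1 (by exact_mod_cast hqr)
  let f0 : ℝ → ℝ := fun x => sSup (g '' {q : ℚ | (q:ℝ) ≤ x})
  have hb : ∀ x, BddAbove (g '' {q : ℚ | (q:ℝ) ≤ x}) := by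
    intro x; refine ⟨1, ?_⟩; rintro _ ⟨q, _, rfl⟩; exact g01 q
  have hne : ∀ x, (g '' {q : ℚ | (q:ℝ) ≤ x}).Nonempty := by
    intro x; obtain ⟨q, hq⟩ := exists_rat_lt x; exact ⟨_, q, hq.le, rfl⟩
  have l1 : ∀ x (q : ℚ), (q:ℝ) ≤ x → g q ≤ f0 x := fun x q hq => le_csSup (hb x) ⟨q, hq, rfl⟩
  have l2 : ∀ (x : ℝ) (q : ℚ), x ≤ (q:ℝ) → f0 x ≤ g q := by
    intro x q hq; apply csSup_le (hne x); rintro _ ⟨r, hr, rfl⟩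
    exact gm r q (by exact_mod_cast (show (r:ℝ) ≤ q from le_trans hr hq))
  have f0m : Monotone f0 := by
    intro a b hab
    apply csSup_le (hne a); rintro _ ⟨r, hr, rfl⟩; exact l1 b r (le_trans hr hab)
  have hcont : ∀ x, ContinuousAt f0 x → Tendsto (fun n => fn (φ n) x) atTop (nhds (f0 x)) := by
    intro x hx
    rw [Metric.tendsto_nhds]
    intro ε hε
    rw [Metric.continuousAt_iff] at hx
    obtain ⟨d, hd, hd'⟩ := hx (ε/2) (by linarith)
    obtain ⟨q, hq1, hq2⟩ := exists_rat_btwn (show x - d/2 < x by linarith)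
    obtain ⟨r, hr1, hr2⟩ := exists_rat_btwn (show x < x + d/2 by linarith)
    have a1 := @hd' (x - d/2) (by rw [Real.dist_eq, abs_lt]; constructor <;> linarith)
    have a2 := @hd' (x + d/2) (by rw [Real.dist_eq, abs_lt]; constructor <;> linarith)
    have b1 := l2 _ q hq1.le
    have b2 := l1 _ r hr2.le
    filter_upwards [(Metric.tendsto_nhds.1 (hg q)) (ε/2) (by linarith),
      (Metric.tendsto_nhds.1 (hg r)) (ε/2) (by linarith)] with n c1 c2
    have m1 := (hfn (φ n)).1 hq2.le
    have m2 := (hfn (φ n)).1 hr1.le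
    rw [Real.dist_eq, abs_lt] at *
    constructor <;> linarith
  obtain ⟨ψ, hψ, h2⟩ := helly_cnt (fun n => fn (φ n)) (fun n => hfn _) _ f0m.countable_not_continuousAt
  have h3 : ∀ x, ∃ y, Tendsto (fun n => fn (φ (ψ n)) x) atTop (nhds y) := by
    intro x
    by_cases hx : ContinuousAt f0 x
    · exact ⟨f0 x, (hcont x hx).comp hψ.tendsto_atTop⟩
    · exact h2 x hx
  choose f hf using h3
  refine ⟨φ ∘ ψ, hφ.comp hψ, f, ⟨fun a b hab => ?_, fun x => ⟨?_, ?_⟩⟩, hf⟩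
  · exact le_of_tendsto_of_tendsto' (hf a) (hf b) fun n => (hfn _).1 hab
  · exact ge_of_tendsto' (hf x) fun n => ((hfn _).2 _).1
  · exact le_of_tendsto' (hf x) fun n => ((hfn _).2 _).2

theorem xinv_qz {h f w : ℝ → ℝ} (hh : MemX h) (hf : MemPsi f) (hI : Interpolates f 0 1)
    (hw : Continuous w) (hw0 : ∀ x, 0 ≤ w x) {v b : ℝ} (hv : v ∈ Ioo (0:ℝ) 1) (hb : qz f v < b)
    (H : ∀ x, qz f v < x → x < b → f x ≤ rm h (w x)) : Xinv h v ≤ w (qz f v) := by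
  have ht : Tendsto w (nhdsWithin (qz f v) (Ioi (qz f v))) (nhds (w (qz f v))) :=
    (hw.tendsto _).mono_left nhdsWithin_le_nhds
  refine ge_of_tendsto ht ?_
  filter_upwards [Ioo_mem_nhdsGT hb] with x hx
  exact Xinv_le_of_rm hh (hw0 x) ((le_of_qz_lt hf hI hv hx.1).trans (H x hx.1 hx.2))

theorem relaxed_lim {ι : Type*} {l : Filter ι} [l.NeBot] {h : ℝ → ℝ} (hh : MemX h)
    {E W : ι → ℝ} {e w : ℝ} (hE : Tendsto E l (nhds e)) (hW : Tendsto W l (nhds w))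
    (hW01 : ∀ i, W i ∈ Icc (0:ℝ) 1) (he : e ∈ Icc (0:ℝ) 1)
    (H : ∀ᶠ i in l, E i ∈ Icc (lm h (W i)) (rm h (W i))) : e ∈ Icc (lm h w) (rm h w) := by
  constructor
  · apply lm_le he.1
    intro u' h0 h1
    refine ge_of_tendsto hE ?_
    filter_upwards [H, (tendsto_order.1 hW).1 u' h1] with i a b
    exact (le_lm hh h0 b (hW01 i).2).trans a.1
  · apply le_rm he.2
    intro u' h0 h1
    refine le_of_tendsto hE ?_
    filter_upwards [H, (tendsto_order.1 hW).2 u' h0] with i a b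
    exact a.2.trans (rm_le hh (hW01 i).1 b h1)

theorem self_mem_lr {h : ℝ → ℝ} (hh : MemX h) {u : ℝ} (hu : u ∈ Icc (0:ℝ) 1) :
    h u ∈ Icc (lm h u) (rm h u) := ⟨lm_le_self hh hu, self_le_rm hh hu⟩

theorem rel_atBot {ι : Type*} {l : Filter ι} {h : ℝ → ℝ} (hh : MemX h) (h0 : rm h 0 = 0)
    {E W : ι → ℝ} (hE0 : ∀ i, 0 ≤ E i) (hW0 : ∀ i, 0 ≤ W i) (hW : Tendsto W l (nhds 0))
    (H : ∀ i, E i ≤ rm h (W i)) : Tendsto E l (nhds 0) := by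
  rw [tendsto_order]
  refine ⟨fun a ha => Eventually.of_forall fun i => ha.trans_le (hE0 i), fun a ha => ?_⟩
  obtain ⟨u', h1, h2, h3⟩ := exists_of_rm_lt (h := h) (u := 0) (c := min a 1) (min_le_right _ _)
    (by rw [h0]; exact lt_min ha one_pos)
  filter_upwards [(tendsto_order.1 hW).2 u' h1] with i hi
  exact (H i).trans_lt ((rm_le hh (hW0 i) hi h2).trans_lt (h3.trans_le (min_le_left _ _)))

theorem rel_atTop {ι : Type*} {l : Filter ι} {h : ℝ → ℝ} (hh : MemX h) (h0 : lm h 1 = 1)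
    {E W : ι → ℝ} (hE0 : ∀ i, E i ≤ 1) (hW0 : ∀ i, W i ≤ 1) (hW : Tendsto W l (nhds 1))
    (H : ∀ i, lm h (W i) ≤ E i) : Tendsto E l (nhds 1) := by
  rw [tendsto_order]
  refine ⟨fun a ha => ?_, fun a ha => Eventually.of_forall fun i => (hE0 i).trans_lt ha⟩
  obtain ⟨u', h1, h2, h3⟩ := exists_of_lt_lm (h := h) (u := 1) (c := max a 0) (le_max_right _ _)
    (by rw [h0]; exact max_lt ha one_pos)
  filter_upwards [(tendsto_order.1 hW).1 u' h2] with i hi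
  exact ((le_max_left a 0).trans_lt h3).trans_le ((le_lm hh h1 hi (hW0 i)).trans (H i))

structure Good (hf hg : ℝ → ℝ) (us vs : ℝ) : Prop where
  hhf : MemX hf
  hhg : MemX hg
  hgap : StrictPosGap hf hg
  cross : IsCrossing hf hg us vs
  n0 : ¬(us = 0 ∧ vs = 0)
  n1 : ¬(us = 1 ∧ vs = 1)

theorem Good.vs_mem {hf hg : ℝ → ℝ} {us vs : ℝ} (H : Good hf hg us vs) : vs ∈ Ioo (0:ℝ) 1 :=
  cross_int1 H.hhg H.hgap H.cross H.n0 H.n1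

theorem Good.pos {hf hg : ℝ → ℝ} {us vs : ℝ} (H : Good hf hg us vs) {u v : ℝ}
    (hu : u ∈ Icc (0:ℝ) 1) (hv0 : 0 < v) (hv1 : v ≤ vs) : 0 < Pot hf hg u v :=
  pot_pos H.hhf H.hhg H.hgap H.cross H.n0 H.n1 hu hv0 hv1

theorem Good.cpos {hf hg : ℝ → ℝ} {us vs : ℝ} (H : Good hf hg us vs) {u v : ℝ}
    (hc : IsCrossing hf hg u v) (h0 : ¬(u = 0 ∧ v = 0)) (h1 : ¬(u = 1 ∧ v = 1)) : 0 < Pot hf hg u v :=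
  (le_max_left _ _).trans_lt (H.hgap.2 u v hc h0 h1)

theorem Good.rmg {hf hg : ℝ → ℝ} {us vs : ℝ} (H : Good hf hg us vs) : rm hg 0 = 0 :=
  rm_hg_zero H.hhf H.hhg H.hgap
theorem Good.rmf {hf hg : ℝ → ℝ} {us vs : ℝ} (H : Good hf hg us vs) : rm hf 0 = 0 :=
  rm_hg_zero H.hhg H.hhf (gap_swap H.hgap)
theorem Good.lmg {hf hg : ℝ → ℝ} {us vs : ℝ} (H : Good hf hg us vs) : lm hg 1 = 1 :=
  lm_hg_one H.hhf H.hhg H.hgap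
theorem Good.lmf {hf hg : ℝ → ℝ} {us vs : ℝ} (H : Good hf hg us vs) : lm hf 1 = 1 :=
  lm_hg_one H.hhg H.hhf (gap_swap H.hgap)

structure Rec (ω hf hg : ℝ → ℝ) (vs δ K c : ℝ) (f g : ℝ → ℝ) : Prop where
  f_psi : MemPsi f
  g_psi : MemPsi g
  g_eq : ∀ x, g x = hg (conv f ω x)
  f_eq : ∀ x, |x + c| < K → f x = hf (conv g ω (x + δ * c + δ * x))
  f_bot : ∀ x, x + c < -K → f x = 0
  f_top : ∀ x, K < x + c → f x = 1
  c_le : c ≤ 0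
  c_ge : -K ≤ c
  c_bot : ∀ x, x < 0 → f x ≤ vs
  c_top : ∀ x, 0 < x → vs ≤ f x

theorem rec_of_appr {ω hf hg : ℝ → ℝ} {vs δ K c : ℝ} {F G : ℝ → ℝ} (h : Appr ω hf hg vs δ K c F G)
    (hc : c ≤ 0) : Rec ω hf hg vs δ K c (fun x => F (x + c)) (fun x => G (x + c)) := by
  refine ⟨psi_shift h.F_psi c, psi_shift h.G_psi c, fun x => ?_, fun x hx => ?_, fun x hx => h.F_bot _ hx,
    fun x hx => h.F_top _ hx, hc, (abs_le.1 h.c_le).1, fun x hx => h.c_bot _ (by linarith),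
    fun x hx => h.c_top _ (by linarith)⟩
  · rw [conv_shift, h.G_eq]
  · rw [conv_shift, h.F_eq _ hx]; congr 2; ring

theorem rec_interp {ω hf hg : ℝ → ℝ} (hω : IsAveragingKernel ω) {us vs : ℝ} (H : Good hf hg us vs)
    {δ K c : ℝ} {f g : ℝ → ℝ} (h : Rec ω hf hg vs δ K c f g) : Interpolates f 0 1 ∧ Interpolates g 0 1 := by
  have hI : Interpolates f 0 1 := by
    constructor
    · apply tendsto_const_nhds.congr'
      filter_upwards [eventually_lt_atBot (-K - c)] with x hx
      exact (h.f_bot x (by linarith)).symm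
    · apply tendsto_const_nhds.congr'
      filter_upwards [eventually_gt_atTop (K - c)] with x hx
      exact (h.f_top x (by linarith)).symm
  have hw := conv_psi hω h.f_psi
  refine ⟨hI, ?_, ?_⟩
  · exact rel_atBot H.hhg H.rmg (fun x => (h.g_psi.2 x).1) (fun x => (hw.2 x).1)
      (conv_atBot hω h.f_psi hI.1) (fun x => by rw [h.g_eq]; exact self_le_rm H.hhg (hw.2 x))
  · exact rel_atTop H.hhg H.lmg (fun x => (h.g_psi.2 x).2) (fun x => (hw.2 x).2)
      (conv_atTop hω h.f_psi hI.2) (fun x => by rw [h.g_eq]; exact lm_le_self H.hhg (hw.2 x))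

theorem rec_energy {ω hf hg : ℝ → ℝ} (hω : IsAveragingKernel ω) {us vs : ℝ} (H : Good hf hg us vs)
    {δ K c : ℝ} {f g : ℝ → ℝ} (hδ : 0 < δ) (h : Rec ω hf hg vs δ K c f g) {X L : ℝ} (hX : X < K) (hL : 0 ≤ L) :
    Pot hf hg (g X) (f X) ≤ kerSup ω * max (δ * X) 0 + (f (X + L) - f X) + (g (X + L) - g X)
      + 2 * Om ω (max (δ * X) 0 - L) := by
  obtain ⟨hfI, hgI⟩ := rec_interp hω H h
  have hv1 : ∀ {v x}, v ∈ Ioo 0 (f x) → v ∈ Ioo (0:ℝ) 1 := fun hv => ⟨hv.1, hv.2.trans_le (h.f_psi.2 _).2⟩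
  have hu1 : ∀ {v x}, v ∈ Ioo 0 (g x) → v ∈ Ioo (0:ℝ) 1 := fun hv => ⟨hv.1, hv.2.trans_le (h.g_psi.2 _).2⟩
  have hv2 : ∀ {v x}, v ∈ Ioo (f x) 1 → v ∈ Ioo (0:ℝ) 1 := fun hv => ⟨(h.f_psi.2 _).1.trans_lt hv.1, hv.2⟩
  have hu2 : ∀ {v x}, v ∈ Ioo (g x) 1 → v ∈ Ioo (0:ℝ) 1 := fun hv => ⟨(h.g_psi.2 _).1.trans_lt hv.1, hv.2⟩
  have hXL : X ≤ X + L := by linarith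
  have hm0 := le_max_right (δ * X) 0
  have hm1 := le_max_left (δ * X) 0
  have := energy (hf := hf) (hg := hg) (η := max (δ * X) 0) (ε := Om ω (max (δ * X) 0 - L)) hω h.f_psi h.g_psi hfI hgI
    (h.f_psi.2 X).1 (h.f_psi.1 hXL) (h.f_psi.2 _).2
    (h.g_psi.2 X).1 (h.g_psi.1 hXL) (h.g_psi.2 _).2 (Om_nonneg hω _) ?_ ?_ ?_ ?_
  · rwa [max_eq_left hm0] at this
  · intro v hv
    have hz : qz f v ≤ X := qz_le h.f_psi hfI (hv1 hv) hv.2.le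
    have hzK : -K - c ≤ qz f v := by
      apply le_of_forall_lt
      intro x hx
      obtain ⟨y, hy1, hy2⟩ := exists_between hx
      exact hy1.trans_le (le_qz h.f_psi hfI (hv1 hv) (by rw [h.f_bot y (by linarith)]; exact hv.1))
    have hwc : Continuous (fun x => conv g ω (x + δ * c + δ * x)) :=
      (conv_cont hω h.g_psi).comp (by fun_prop)
    have := xinv_qz (w := fun x => conv g ω (x + δ * c + δ * x)) H.hhf h.f_psi hfI hwc
      (fun x => ((conv_psi hω h.g_psi).2 _).1) (hv1 hv) (show qz f v < K by linarith) (by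
        intro x hx1 hx2
        rw [h.f_eq x (by rw [abs_lt]; constructor <;> linarith [h.c_le])]
        exact self_le_rm H.hhf ((conv_psi hω h.g_psi).2 _))
    refine this.trans (conv_mono hω h.g_psi ?_)
    have : δ * qz f v ≤ δ * X := by gcongr
    have : δ * c ≤ 0 := mul_nonpos_of_nonneg_of_nonpos hδ.le h.c_le
    linarith
  · intro u hu
    apply xinv_qz H.hhg h.g_psi hgI (conv_cont hω h.f_psi) (fun x => ((conv_psi hω h.f_psi).2 _).1) (hu1 hu)
      (lt_add_one _)
    intro x _ _
    rw [h.g_eq]; exact self_le_rm H.hhg ((conv_psi hω h.f_psi).2 _)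
  · intro v hv u hu
    apply Om_mono hω
    have := qz_le h.f_psi hfI (hv1 hv) hv.2.le
    have := le_qz h.g_psi hgI (hu2 hu) hu.1
    linarith
  · intro u hu v hv
    apply Om_mono hω
    have := qz_le h.g_psi hgI (hu1 hu) hu.2.le
    have := le_qz h.f_psi hfI (hv2 hv) hv.1
    linarith

structure Lim (ω hf hg : ℝ → ℝ) (vs : ℝ) (f g : ℝ → ℝ) (α : ℝ) (fn gn : ℕ → ℝ → ℝ)
    (yn : ℕ → ℝ → ℝ) : Prop where
  f_psi : MemPsi f
  g_psi : MemPsi g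
  fn_psi : ∀ n, MemPsi (fn n)
  gn_psi : ∀ n, MemPsi (gn n)
  f_lim : ∀ x, Tendsto (fun n => fn n x) atTop (nhds (f x))
  g_lim : ∀ x, Tendsto (fun n => gn n x) atTop (nhds (g x))
  y_lim : ∀ x, Tendsto (fun n => yn n x) atTop (nhds (x + α))
  y_mono : ∀ n, Monotone (yn n)
  gn_eq : ∀ n x, gn n x = hg (conv (fn n) ω x)
  fn_eq : ∀ x, ∀ᶠ n in atTop, fn n x = hf (conv (gn n) ω (yn n x))
  α_le : α ≤ 0
  f_int : Interpolates f 0 1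
  g_int : Interpolates g 0 1
  c_bot : ∀ x, x < 0 → f x ≤ vs

theorem psi_bot {f : ℝ → ℝ} (hf : MemPsi f) : ∃ b, Tendsto f atBot (nhds b) :=
  ⟨_, tendsto_atBot_ciInf hf.1 ⟨0, by rintro _ ⟨x, rfl⟩; exact (hf.2 x).1⟩⟩

theorem psi_top {f : ℝ → ℝ} (hf : MemPsi f) : ∃ b, Tendsto f atTop (nhds b) :=
  ⟨_, tendsto_atTop_ciSup hf.1 ⟨1, by rintro _ ⟨x, rfl⟩; exact (hf.2 x).2⟩⟩

theorem psi_lim_mem {ι : Type*} {l : Filter ι} [l.NeBot] {f : ℝ → ℝ} (hf : MemPsi f) {y : ι → ℝ} {b : ℝ}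
    (h : Tendsto (fun i => f (y i)) l (nhds b)) : b ∈ Icc (0:ℝ) 1 :=
  ⟨ge_of_tendsto' h fun i => (hf.2 _).1, le_of_tendsto' h fun i => (hf.2 _).2⟩

theorem Pot_tendsto (hf hg : ℝ → ℝ) {ι : Type*} {l : Filter ι} {U V : ι → ℝ} {u v : ℝ}
    (hU : Tendsto U l (nhds u)) (hV : Tendsto V l (nhds v)) :
    Tendsto (fun i => Pot hf hg (U i) (V i)) l (nhds (Pot hf hg u v)) := by
  have h1 : Continuous (fun u => ∫ x in (0:ℝ)..u, Xinv hg x) :=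
    intervalIntegral.continuous_primitive (fun a b => Xinv_ii hg a b) 0
  have h2 : Continuous (fun u => ∫ x in (0:ℝ)..u, Xinv hf x) :=
    intervalIntegral.continuous_primitive (fun a b => Xinv_ii hf a b) 0
  exact (((h1.tendsto u).comp hU).add ((h2.tendsto v).comp hV)).sub (hU.mul hV)

/-- the energy inequality at infinity -/
theorem energy_inf {ω hf hg f g : ℝ → ℝ} (hω : IsAveragingKernel ω) {l : Filter ℝ} [l.NeBot]
    (hl : ∀ L : ℝ, Tendsto (fun x => x + L) l l) {a a' : ℝ}
    (hE : ∀ X L, 0 ≤ L → Pot hf hg (g X) (f X) ≤ (f (X + L) - f X) + (g (X + L) - g X) + 2 * Om ω (-L))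
    (h1 : Tendsto f l (nhds a)) (h2 : Tendsto g l (nhds a')) : Pot hf hg a' a ≤ 0 := by
  have step : ∀ L, 0 ≤ L → Pot hf hg a' a ≤ 2 * Om ω (-L) := by
    intro L hL
    have t1 : Tendsto (fun X => Pot hf hg (g X) (f X)) l (nhds (Pot hf hg a' a)) :=
      Pot_tendsto hf hg h2 h1
    have t2 : Tendsto (fun X => (f (X + L) - f X) + (g (X + L) - g X) + 2 * Om ω (-L)) l
        (nhds ((a - a) + (a' - a') + 2 * Om ω (-L))) :=
      (((h1.comp (hl L)).sub h1).add ((h2.comp (hl L)).sub h2)).add_const _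
    have := le_of_tendsto_of_tendsto' t1 t2 fun X => hE X L hL
    linarith
  have t3 : Tendsto (fun L => 2 * Om ω (-L)) atTop (nhds (2 * 0)) :=
    ((Om_atBot hω).comp tendsto_neg_atTop_atBot).const_mul 2
  rw [mul_zero] at t3
  refine ge_of_tendsto t3 ?_
  filter_upwards [eventually_ge_atTop 0] with L hL
  exact step L hL

theorem lim_exists {ω hf hg : ℝ → ℝ} (hω : IsAveragingKernel ω) {us vs : ℝ} (H : Good hf hg us vs)
    (δ K c : ℕ → ℝ) (F G : ℕ → ℝ → ℝ) (hδ : ∀ n : ℕ, 0 < δ n) (hδ1 : ∀ n : ℕ, δ n < 1 / ((n:ℝ) + 1))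
    (hK : ∀ n : ℕ, (n:ℝ) + 1 < δ n * K n) (hR : ∀ n, Rec ω hf hg vs (δ n) (K n) (c n) (F n) (G n)) :
    ∃ f g α fn gn yn, Lim ω hf hg vs f g α fn gn yn := by
  obtain ⟨φ1, hφ1, f, hfpsi, hflim⟩ := helly F fun n => (hR n).f_psi
  obtain ⟨φ2, hφ2, g, hgpsi, hglim⟩ := helly (fun n => G (φ1 n)) fun n => (hR _).g_psi
  -- first subsequence
  let φ : ℕ → ℕ := fun n => φ1 (φ2 n)
  have hφ : StrictMono φ := hφ1.comp hφ2
  have hφt := hφ.tendsto_atTop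
  have hfl : ∀ x, Tendsto (fun n => F (φ n) x) atTop (nhds (f x)) :=
    fun x => (hflim x).comp hφ2.tendsto_atTop
  have hgl : ∀ x, Tendsto (fun n => G (φ n) x) atTop (nhds (g x)) := hglim
  have δ0 : Tendsto δ atTop (nhds 0) :=
    squeeze_zero (fun n => (hδ n).le) (fun n => (hδ1 n).le) tendsto_one_div_add_atTop_nhds_zero_nat
  have δ1 : ∀ n, δ n < 1 := fun n => (hδ1 n).trans_le (by
    rw [div_le_one (by positivity)]; linarith [Nat.cast_nonneg (α := ℝ) n])
  have hKn : ∀ n : ℕ, (n:ℝ) + 1 < K n := by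
    intro n
    have h1 := hK n
    have h2 := hδ n
    have h3 := δ1 n
    have h4 : 0 < K n := by
      by_contra hc
      have : δ n * K n ≤ 0 := mul_nonpos_of_nonneg_of_nonpos h2.le (not_lt.1 hc)
      have := Nat.cast_nonneg (α := ℝ) n
      linarith
    nlinarith
  have hKt : ∀ X : ℝ, ∀ᶠ n in atTop, X < K (φ n) := by
    intro X
    have : ∀ᶠ n : ℕ in atTop, X < K n := by
      obtain ⟨N, hN⟩ := exists_nat_gt X
      filter_upwards [eventually_ge_atTop N] with n hn
      have : (N:ℝ) ≤ n := by exact_mod_cast hn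
      linarith [hKn n]
    exact hφt.eventually this
  have hE : ∀ X L, 0 ≤ L → Pot hf hg (g X) (f X) ≤ (f (X + L) - f X) + (g (X + L) - g X) + 2 * Om ω (-L) := by
    intro X L hL
    have t1 : Tendsto (fun n => Pot hf hg (G (φ n) X) (F (φ n) X)) atTop (nhds (Pot hf hg (g X) (f X))) :=
      Pot_tendsto hf hg (hgl X) (hfl X)
    have tη : Tendsto (fun n => max (δ (φ n) * X) 0) atTop (nhds (max (0 * X) 0)) :=
      ((δ0.comp hφt).mul_const X).max tendsto_const_nhds
    rw [zero_mul, max_self] at tη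
    have t2 : Tendsto (fun n => kerSup ω * max (δ (φ n) * X) 0 + (F (φ n) (X + L) - F (φ n) X) +
        (G (φ n) (X + L) - G (φ n) X) + 2 * Om ω (max (δ (φ n) * X) 0 - L)) atTop
        (nhds (kerSup ω * 0 + (f (X + L) - f X) + (g (X + L) - g X) + 2 * Om ω (0 - L))) :=
      (((tη.const_mul _).add ((hfl _).sub (hfl _))).add ((hgl _).sub (hgl _))).add
        ((((Om_cont hω).tendsto _).comp (tη.sub_const L)).const_mul 2)
    have := le_of_tendsto_of_tendsto t1 t2 (by
      filter_upwards [hKt X] with n hn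
      exact rec_energy hω H (hδ _) (hR _) hn hL)
    rw [zero_sub, mul_zero, zero_add] at this
    exact this
  have grel : ∀ x, g x ∈ Icc (lm hg (conv f ω x)) (rm hg (conv f ω x)) := by
    intro x
    refine relaxed_lim H.hhg (hgl x) (W := fun n => conv (F (φ n)) ω x) (conv_tendsto' hω (fun n => (hR _).f_psi) hfpsi hfl tendsto_const_nhds)
      (fun n => (conv_psi hω (hR _).f_psi).2 _) (hgpsi.2 x) (Eventually.of_forall fun n => ?_)
    rw [(hR _).g_eq]; exact self_mem_lr H.hhg ((conv_psi hω (hR _).f_psi).2 _)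
  have fbot : ∀ x, x < 0 → f x ≤ vs := fun x hx => le_of_tendsto' (hfl x) fun n => (hR _).c_bot x hx
  have ftop : ∀ x, 0 < x → vs ≤ f x := fun x hx => ge_of_tendsto' (hfl x) fun n => (hR _).c_top x hx
  have hwf := conv_psi hω hfpsi
  have hwg := conv_psi hω hgpsi
  -- limit at -∞
  obtain ⟨b, hb⟩ := psi_bot hfpsi
  obtain ⟨b', hb'⟩ := psi_bot hgpsi
  have hbm := psi_lim_mem hfpsi hb
  have hbm' := psi_lim_mem hgpsi hb'
  have hb0 : b = 0 := by
    have h1 := energy_inf hω (fun L => tendsto_atBot_add_const_right _ L tendsto_id) hE hb hb'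
    have h2 : b ≤ vs := by
      refine le_of_tendsto hb ?_
      filter_upwards [eventually_lt_atBot 0] with x hx
      exact fbot x hx
    by_contra hne
    exact absurd (H.pos hbm' (lt_of_le_of_ne hbm.1 (Ne.symm hne)) h2) (not_lt.2 h1)
  rw [hb0] at hb
  have hg0 : Tendsto g atBot (nhds 0) := rel_atBot H.hhg H.rmg (fun x => (hgpsi.2 x).1)
    (fun x => (hwf.2 x).1) (conv_atBot hω hfpsi hb) (fun x => (grel x).2)
  -- α bounded
  obtain ⟨y, hy⟩ : ∃ y, ∀ᶠ n in atTop, y < δ (φ n) * c (φ n) := by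
    obtain ⟨u', h1, h2, h3⟩ := exists_of_rm_lt (h := hf) (u := 0) (c := vs) H.vs_mem.2.le
      (by rw [H.rmf]; exact H.vs_mem.1)
    obtain ⟨y, hy⟩ := ((tendsto_order.1 (conv_atBot hω hgpsi hg0)).2 u' h1).exists
    refine ⟨y - 2, ?_⟩
    have ht : Tendsto (fun n => conv (G (φ n)) ω y) atTop (nhds (conv g ω y)) :=
      conv_tendsto' hω (fun n => (hR _).g_psi) hgpsi hgl tendsto_const_nhds
    filter_upwards [hKt 1, (tendsto_order.1 ht).2 u' hy] with n hn hn2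
    by_contra hcon
    have hc := not_lt.1 hcon
    have e1 := (hR (φ n)).f_eq 1 (by
      rw [abs_lt]; constructor <;> linarith [(hR (φ n)).c_le, (hR (φ n)).c_ge])
    have e2 := (hR (φ n)).c_top 1 one_pos
    rw [e1] at e2
    have hp := conv_psi hω (hR (φ n)).g_psi
    have e3 := hp.1 (show 1 + δ (φ n) * c (φ n) + δ (φ n) * 1 ≤ y by linarith [δ1 (φ n)])
    have e4 := H.hhf.1 (hp.2 _) ⟨h1.le, h2⟩ (e3.trans hn2.le)
    linarith
  have hαle : ∀ n, δ (φ n) * c (φ n) ≤ 0 := fun n =>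
    mul_nonpos_of_nonneg_of_nonpos (hδ _).le (hR _).c_le
  have hdom : ∀ x, ∀ᶠ n in atTop, |x + c (φ n)| < K (φ n) := by
    intro x
    obtain ⟨N, hN⟩ := exists_nat_gt (|x| + |y|)
    filter_upwards [hy, hKt x, eventually_ge_atTop N] with n h1 h2 h3
    have h4 : (N:ℝ) ≤ (φ n : ℝ) := by exact_mod_cast h3.trans (hφ.id_le n)
    have h5 := hK (φ n)
    have h6 := hδ (φ n)
    have h7 := δ1 (φ n)
    have h8 := (hR (φ n)).c_le
    rw [abs_lt]
    constructor
    · have h9 := neg_abs_le y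
      have h10 := neg_abs_le x
      have h11 : |x| < δ (φ n) * (K (φ n) + c (φ n)) := by
        rw [mul_add]; linarith [abs_nonneg y]
      have h12 : 0 < K (φ n) + c (φ n) := by
        by_contra hc
        have := mul_nonpos_of_nonneg_of_nonpos h6.le (not_lt.1 hc)
        linarith [abs_nonneg x]
      nlinarith
    · linarith
  -- second subsequence
  obtain ⟨α, hαm, ψ, hψ, hα⟩ := (isCompact_Icc (a := y) (b := (0:ℝ))).tendsto_subseq'
    (x := fun n => δ (φ n) * c (φ n)) ((hy.mono fun n hn => ⟨hn.le, hαle n⟩).frequently)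
  have hψt := hψ.tendsto_atTop
  have hyl : ∀ x, Tendsto (fun n => x + δ (φ (ψ n)) * c (φ (ψ n)) + δ (φ (ψ n)) * x) atTop (nhds (x + α)) := by
    intro x
    have := (hα.const_add x).add (((δ0.comp hφt).comp hψt).mul_const x)
    rw [zero_mul, add_zero] at this
    exact this
  have frel : ∀ x, f x ∈ Icc (lm hf (conv g ω (x + α))) (rm hf (conv g ω (x + α))) := by
    intro x
    refine relaxed_lim H.hhf ((hfl x).comp hψt)
      (conv_tendsto' hω (fun n => (hR (φ (ψ n))).g_psi) hgpsi (fun z => (hgl z).comp hψt) (hyl x))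
      (fun n => (conv_psi hω (hR _).g_psi).2 _) (hfpsi.2 x) ?_
    filter_upwards [hψt.eventually (hdom x)] with n hn
    simp only [Function.comp]
    rw [(hR _).f_eq x hn]; exact self_mem_lr H.hhf ((conv_psi hω (hR _).g_psi).2 _)
  -- limit at +∞
  obtain ⟨a, ha⟩ := psi_top hfpsi
  obtain ⟨a', ha'⟩ := psi_top hgpsi
  have ham := psi_lim_mem hfpsi ha
  have ham' := psi_lim_mem hgpsi ha'
  have havs : vs ≤ a := by
    refine ge_of_tendsto ha ?_
    filter_upwards [eventually_gt_atTop 0] with x hx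
    exact ftop x hx
  have h11 : a' = 1 ∧ a = 1 := by
    have h1 := energy_inf hω (fun L => tendsto_atTop_add_const_right _ L tendsto_id) hE ha ha'
    have hc : IsCrossing hf hg a' a := by
      refine ⟨ham', ham, ?_, ?_⟩
      · exact relaxed_lim H.hhg ha' (conv_atTop hω hfpsi ha) hwf.2 ham' (Eventually.of_forall grel)
      · exact relaxed_lim H.hhf ha ((conv_atTop hω hgpsi ha').comp (tendsto_atTop_add_const_right _ α tendsto_id))
          (fun x => hwg.2 _) ham (Eventually.of_forall frel)
    by_contra hne
    exact absurd (H.cpos hc (fun h => by linarith [h.2, H.vs_mem.1]) hne) (not_lt.2 h1)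
  rw [h11.2] at ha
  rw [h11.1] at ha'
  refine ⟨f, g, α, fun n => F (φ (ψ n)), fun n => G (φ (ψ n)), fun n x => x + δ (φ (ψ n)) * c (φ (ψ n)) + δ (φ (ψ n)) * x,
    hfpsi, hgpsi, fun n => (hR _).f_psi, fun n => (hR _).g_psi, fun x => (hfl x).comp hψt,
    fun x => (hgl x).comp hψt, hyl,
    fun n x y hxy => by
      have := mul_le_mul_of_nonneg_left hxy (hδ (φ (ψ n))).le
      show x + δ (φ (ψ n)) * c (φ (ψ n)) + δ (φ (ψ n)) * x ≤ y + δ (φ (ψ n)) * c (φ (ψ n)) + δ (φ (ψ n)) * y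
      linarith,
    fun n x => (hR _).g_eq x, fun x => ?_, hαm.2, ⟨hb, ha⟩, ⟨hg0, ha'⟩, fbot⟩
  filter_upwards [hψt.eventually (hdom x)] with n hn
  exact (hR _).f_eq x hn

theorem flat_lift {h : ℝ → ℝ} (hh : MemX h) {E W : ℝ → ℝ} {En Wn : ℕ → ℝ → ℝ}
    (hWmem : ∀ n x, Wn n x ∈ Icc (0:ℝ) 1) (hWmono : ∀ n, Monotone (Wn n)) (hW : Monotone W)
    (hW01 : ∀ x, W x ∈ Icc (0:ℝ) 1)
    (hWl : ∀ x, Tendsto (fun n => Wn n x) atTop (nhds (W x)))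
    (hEl : ∀ x, Tendsto (fun n => En n x) atTop (nhds (E x)))
    (hEn : ∀ x, ∀ᶠ n in atTop, En n x = h (Wn n x)) {a b x0 e : ℝ}
    (hE : ∀ x ∈ Ioo a b, E x = e) (hx0 : x0 ∈ Ioo a b) (bad : ¬ ∀ᶠ n in atTop, En n x0 = e) :
    ∃ s t c m, a < s ∧ s < t ∧ t < b ∧ W s = c ∧ W t = c ∧ s < m ∧ m < t ∧
      ¬ ∀ᶠ n in atTop, Wn n m = c := by
  by_contra hcon
  push Not at hcon
  apply bad
  obtain ⟨x1, h1a, h1b⟩ := exists_between hx0.1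
  obtain ⟨x2, h2a, h2b⟩ := exists_between hx0.2
  have flat : ∀ {s t}, a < s → s < t → t < b → W s = W t → ∃ m, s < m ∧ m < t ∧ h (W s) = e ∧
      ∀ᶠ n in atTop, Wn n m = W s := by
    intro s t hs hst ht hWe
    obtain ⟨m, hm1, hm2⟩ := exists_between hst
    have hev := hcon s t (W s) m hs hst ht rfl hWe.symm hm1 hm2
    refine ⟨m, hm1, hm2, ?_, hev⟩
    have : Tendsto (fun n => En n m) atTop (nhds (h (W s))) := by
      apply tendsto_const_nhds.congr'
      filter_upwards [hev, hEn m] with n e1 e2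
      rw [e2, e1]
    rw [← tendsto_nhds_unique (hEl m) this]
    exact hE m ⟨hs.trans hm1, hm2.trans ht⟩
  have low : ∀ᶠ n in atTop, e ≤ En n x0 := by
    rcases (hW h1b.le).lt_or_eq with hlt | heq
    · obtain ⟨u, hu1, hu2⟩ := exists_between hlt
      have hu : u ∈ Icc (0:ℝ) 1 := ⟨(hW01 _).1.trans hu1.le, hu2.le.trans (hW01 _).2⟩
      have : e ≤ h u := by
        rw [← hE x1 ⟨h1a, h1b.trans hx0.2⟩]
        refine le_of_tendsto (hEl x1) ?_
        filter_upwards [hEn x1, (tendsto_order.1 (hWl x1)).2 u hu1] with n e1 e2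
        rw [e1]; exact hh.1 (hWmem _ _) hu e2.le
      filter_upwards [hEn x0, (tendsto_order.1 (hWl x0)).1 u hu2] with n e1 e2
      rw [e1]; exact this.trans (hh.1 hu (hWmem _ _) e2.le)
    · obtain ⟨m, hm1, hm2, hm3, hm4⟩ := flat h1a h1b hx0.2 heq
      filter_upwards [hm4, hEn x0] with n e1 e2
      rw [e2, ← hm3, ← e1]; exact hh.1 (hWmem _ _) (hWmem _ _) (hWmono n hm2.le)
  have up : ∀ᶠ n in atTop, En n x0 ≤ e := by
    rcases (hW h2a.le).lt_or_eq with hlt | heq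
    · obtain ⟨u, hu1, hu2⟩ := exists_between hlt
      have hu : u ∈ Icc (0:ℝ) 1 := ⟨(hW01 _).1.trans hu1.le, hu2.le.trans (hW01 _).2⟩
      have : h u ≤ e := by
        rw [← hE x2 ⟨hx0.1.trans h2a, h2b⟩]
        refine ge_of_tendsto (hEl x2) ?_
        filter_upwards [hEn x2, (tendsto_order.1 (hWl x2)).1 u hu2] with n e1 e2
        rw [e1]; exact hh.1 hu (hWmem _ _) e2.le
      filter_upwards [hEn x0, (tendsto_order.1 (hWl x0)).2 u hu1] with n e1 e2
      rw [e1]; exact (hh.1 (hWmem _ _) hu e2.le).trans this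
    · obtain ⟨m, hm1, hm2, hm3, hm4⟩ := flat hx0.1 h2a h2b heq
      filter_upwards [hm4, hEn x0] with n e1 e2
      rw [e2, ← hm3, ← e1]; exact hh.1 (hWmem _ _) (hWmem _ _) (hWmono n hm1.le)
  filter_upwards [low, up] with n e1 e2
  exact le_antisymm e2 e1

theorem flat_conv {ω K : ℝ → ℝ} (hω : IsAveragingKernel ω) (hK : MemPsi K) {s t ρ : ℝ} (hst : s < t)
    (hρ0 : 0 < ρ) (hρ : ∀ x, |x| < ρ → 0 < ω x) (h : conv K ω s = conv K ω t) :
    ∀ x ∈ Ioo (s - ρ) (t + ρ), ∀ y ∈ Ioo (s - ρ) (t + ρ), K x = K y := by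
  have h0 : ∫ τ, (K (t - τ) * ω τ - K (s - τ) * ω τ) = 0 := by
    rw [integral_sub (psi_int hω hK t) (psi_int hω hK s), ← conv_eq, ← conv_eq, h, sub_self]
  have hle : ∀ τ, K (s - τ) ≤ K (t - τ) := fun τ => hK.1 (by linarith)
  have hae := (integral_eq_zero_iff_of_nonneg (fun τ => by
    have := mul_le_mul_of_nonneg_right (hle τ) (hω.2.1 τ)
    simp only [Pi.zero_apply, Pi.sub_apply]; linarith) ((psi_int hω hK t).sub (psi_int hω hK s))).1 h0
  have hder : ∀ x ∈ Ioo (s - ρ) (t + ρ), HasDerivAt K 0 x := by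
    intro x hx
    have hlt : max (s - x) (-ρ) < min (t - x) ρ := by
      rw [max_lt_iff, lt_min_iff, lt_min_iff]
      exact ⟨⟨by linarith, by linarith [hx.1]⟩, by linarith [hx.2], by linarith⟩
    obtain ⟨τ, hτ, hτ2⟩ : ∃ τ ∈ Ioo (max (s - x) (-ρ)) (min (t - x) ρ), K (t - τ) * ω τ - K (s - τ) * ω τ = 0 := by
      by_contra hcon
      push Not at hcon
      have : volume (Ioo (max (s - x) (-ρ)) (min (t - x) ρ)) = 0 := by
        refine measure_mono_null ?_ (ae_iff.1 hae)
        intro τ hτ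
        exact hcon τ hτ
      rw [Real.volume_Ioo, ENNReal.ofReal_eq_zero] at this
      linarith
    have h1 := max_lt_iff.1 hτ.1
    have h2 := lt_min_iff.1 hτ.2
    have hpos := hρ τ (abs_lt.2 ⟨h1.2, h2.2⟩)
    have heq : K (t - τ) = K (s - τ) := by
      rw [← sub_mul] at hτ2
      rcases mul_eq_zero.1 hτ2 with h | h
      · linarith
      · linarith
    have hev : K =ᶠ[nhds x] fun _ => K (s - τ) := by
      filter_upwards [Ioo_mem_nhds (show s - τ < x by linarith) (show x < t - τ by linarith)] with y hy
      exact le_antisymm ((hK.1 hy.2.le).trans heq.le) (hK.1 hy.1.le)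
    exact (hasDerivAt_const x (K (s - τ))).congr_of_eventuallyEq hev
  intro x hx y hy
  exact isOpen_Ioo.is_const_of_deriv_eq_zero isPreconnected_Ioo
    (fun z hz => (hder z hz).differentiableAt.differentiableWithinAt)
    (fun z hz => (hder z hz).deriv) hx hy

theorem conv_flat_val {ω K : ℝ → ℝ} (hω : IsAveragingKernel ω) {W e m : ℝ}
    (hW : ∀ x, W < |x| → ω x = 0) (h : ∀ y ∈ Icc (m - W) (m + W), K y = e) : conv K ω m = e := by
  rw [← conv_const hω e m, conv_eq, conv_eq]
  congr 1
  funext τ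
  rcases le_or_gt |τ| W with h1 | h1
  · rw [abs_le] at h1
    rw [h _ ⟨by linarith, by linarith⟩]
  · rw [hW τ h1, mul_zero, mul_zero]

theorem flat_conv_W {ω K : ℝ → ℝ} (hω : IsAveragingKernel ω) (hK : MemPsi K) {s t W c : ℝ} (hst : s < t)
    (hW0 : 0 < W) (hW : ∀ x, W < |x| → ω x = 0)
    (hρ : ∀ x, |x| < W → 0 < ω x) (hs : conv K ω s = c) (ht : conv K ω t = c) :
    ∀ x ∈ Ioo (s - W) (t + W), K x = c := by
  have h := flat_conv hω hK hst hW0 hρ (hs.trans ht.symm)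
  obtain ⟨m, hm1, hm2⟩ := exists_between hst
  intro x hx
  have h1 : conv K ω m = K x := conv_flat_val hω hW fun y hy =>
    h y ⟨by linarith [hy.1], by linarith [hy.2]⟩ x hx
  rw [← h1]
  exact le_antisymm (ht ▸ conv_mono hω hK hm2.le) (hs ▸ conv_mono hω hK hm1.le)

theorem flat_conv_ev {ω : ℝ → ℝ} {Kn : ℕ → ℝ → ℝ} (hω : IsAveragingKernel ω) (hK : ∀ n, MemPsi (Kn n))
    {s t W c m : ℝ} (hW0 : 0 < W) (hW : ∀ x, W < |x| → ω x = 0) {y : ℕ → ℝ} (hm1 : s < m) (hm2 : m < t)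
    (hy : Tendsto y atTop (nhds m)) (H : ∀ x ∈ Ioo (s - W) (t + W), ∀ᶠ n in atTop, Kn n x = c) :
    ∀ᶠ n in atTop, conv (Kn n) ω (y n) = c := by
  obtain ⟨s', h1, h2⟩ := exists_between hm1
  obtain ⟨t', h3, h4⟩ := exists_between hm2
  filter_upwards [H (s' - W) ⟨by linarith, by linarith⟩, H (t' + W) ⟨by linarith, by linarith⟩,
    (tendsto_order.1 hy).1 s' h2, (tendsto_order.1 hy).2 t' h3] with n e1 e2 e3 e4
  refine conv_flat_val hω hW fun x hx => ?_
  exact le_antisymm (e2 ▸ (hK n).1 (by linarith [hx.2])) (e1 ▸ (hK n).1 (by linarith [hx.1]))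

section
variable {ω hf hg : ℝ → ℝ} {us vs : ℝ} {f g : ℝ → ℝ} {α : ℝ} {fn gn yn : ℕ → ℝ → ℝ}

theorem Lim.w_lim (hω : IsAveragingKernel ω) (h : Lim ω hf hg vs f g α fn gn yn) (x : ℝ) :
    Tendsto (fun n => conv (gn n) ω (yn n x)) atTop (nhds (conv g ω (x + α))) :=
  conv_tendsto' hω h.gn_psi h.g_psi h.g_lim (h.y_lim x)

theorem Lim.c_lim (hω : IsAveragingKernel ω) (h : Lim ω hf hg vs f g α fn gn yn) (x : ℝ) :
    Tendsto (fun n => conv (fn n) ω x) atTop (nhds (conv f ω x)) :=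
  conv_tendsto' hω h.fn_psi h.f_psi h.f_lim tendsto_const_nhds

theorem Lim.frel (hω : IsAveragingKernel ω) (H : Good hf hg us vs) (h : Lim ω hf hg vs f g α fn gn yn)
    (x : ℝ) : f x ∈ Icc (lm hf (conv g ω (x + α))) (rm hf (conv g ω (x + α))) := by
  refine relaxed_lim H.hhf (h.f_lim x) (h.w_lim hω x) (fun n => (conv_psi hω (h.gn_psi n)).2 _) (h.f_psi.2 x) ?_
  filter_upwards [h.fn_eq x] with n hn
  rw [hn]; exact self_mem_lr H.hhf ((conv_psi hω (h.gn_psi n)).2 _)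

theorem Lim.grel (hω : IsAveragingKernel ω) (H : Good hf hg us vs) (h : Lim ω hf hg vs f g α fn gn yn)
    (x : ℝ) : g x ∈ Icc (lm hg (conv f ω x)) (rm hg (conv f ω x)) := by
  refine relaxed_lim H.hhg (h.g_lim x) (h.c_lim hω x) (fun n => (conv_psi hω (h.fn_psi n)).2 _) (h.g_psi.2 x) ?_
  filter_upwards with n
  rw [h.gn_eq]; exact self_mem_lr H.hhg ((conv_psi hω (h.fn_psi n)).2 _)

/-- energy with finite range -/
theorem Lim.en (hω : IsAveragingKernel ω) (H : Good hf hg us vs) (h : Lim ω hf hg vs f g α fn gn yn)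
    {W p q : ℝ} (hW0 : 0 < W) (hW : ∀ x, W < |x| → ω x = 0) (hp : p ∈ Icc (0:ℝ) 1) (hq : q ∈ Icc (0:ℝ) 1)
    (e1 : ∀ v ∈ Ioo 0 p, ∀ u ∈ Ioo q 1, qz f v + α - qz g u ≤ -W)
    (e2 : ∀ u ∈ Ioo 0 q, ∀ v ∈ Ioo p 1, qz g u - qz f v ≤ -W) : Pot hf hg q p ≤ 0 := by
  have := energy (hf := hf) (hg := hg) (η := α) (ε := 0) (p := p) (p' := p) (q := q) (q' := q)
    hω h.f_psi h.g_psi h.f_int h.g_int hp.1 le_rfl hp.2 hq.1 le_rfl hq.2 le_rfl ?_ ?_ ?_ ?_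
  · rw [max_eq_right h.α_le] at this; linarith
  · intro v hv
    exact xinv_qz (w := fun x => conv g ω (x + α)) H.hhf h.f_psi h.f_int
      ((conv_cont hω h.g_psi).comp (by fun_prop)) (fun x => ((conv_psi hω h.g_psi).2 _).1)
      ⟨hv.1, hv.2.trans_le hp.2⟩ (lt_add_one _) (fun x _ _ => (h.frel hω H x).2)
  · intro u hu
    exact xinv_qz H.hhg h.g_psi h.g_int
      (conv_cont hω h.f_psi) (fun x => ((conv_psi hω h.f_psi).2 _).1)
      ⟨hu.1, hu.2.trans_le hq.2⟩ (lt_add_one _) (fun x _ _ => (h.grel hω H x).2)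
  · intro v hv u hu
    rw [Om_zero hω hW hW0 (e1 v hv u hu)]
  · intro v hv u hu
    rw [Om_zero hω hW hW0 (e2 v hv u hu)]

theorem rel_int {h : ℝ → ℝ} {e c : ℝ} (h0 : rm h 0 = 0) (h1 : lm h 1 = 1) (hc : c ∈ Icc (0:ℝ) 1)
    (he : e ∈ Ioo (0:ℝ) 1) (hr : e ∈ Icc (lm h c) (rm h c)) : c ∈ Ioo (0:ℝ) 1 := by
  constructor
  · rcases hc.1.lt_or_eq with h | h
    · exact h
    · rw [← h, h0] at hr; linarith [hr.2, he.1]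
  · rcases hc.2.lt_or_eq with h | h
    · exact h
    · rw [h, h1] at hr; linarith [hr.1, he.2]

theorem Lim.liftF (hω : IsAveragingKernel ω) (H : Good hf hg us vs) (h : Lim ω hf hg vs f g α fn gn yn)
    {a b x0 e : ℝ} (hE : ∀ x ∈ Ioo a b, f x = e) (hx0 : x0 ∈ Ioo a b)
    (bad : ¬ ∀ᶠ n in atTop, fn n x0 = e) :
    ∃ s t c m, a < s ∧ s < t ∧ t < b ∧ conv g ω (s + α) = c ∧ conv g ω (t + α) = c ∧ s < m ∧ m < t ∧
      ¬ ∀ᶠ n in atTop, conv (gn n) ω (yn n m) = c :=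
  flat_lift (E := f) (En := fn) (W := fun x => conv g ω (x + α)) (Wn := fun n x => conv (gn n) ω (yn n x))
    H.hhf (fun n x => (conv_psi hω (h.gn_psi n)).2 _)
    (fun n x y hxy => conv_mono hω (h.gn_psi n) (h.y_mono n hxy))
    (fun x y hxy => conv_mono hω h.g_psi (by linarith))
    (fun x => (conv_psi hω h.g_psi).2 _) (h.w_lim hω) h.f_lim h.fn_eq hE hx0 bad

theorem Lim.liftG (hω : IsAveragingKernel ω) (H : Good hf hg us vs) (h : Lim ω hf hg vs f g α fn gn yn)
    {a b x0 e : ℝ} (hE : ∀ x ∈ Ioo a b, g x = e) (hx0 : x0 ∈ Ioo a b)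
    (bad : ¬ ∀ᶠ n in atTop, gn n x0 = e) :
    ∃ s t c m, a < s ∧ s < t ∧ t < b ∧ conv f ω s = c ∧ conv f ω t = c ∧ s < m ∧ m < t ∧
      ¬ ∀ᶠ n in atTop, conv (fn n) ω m = c :=
  flat_lift (E := g) (En := gn) (W := conv f ω) (Wn := fun n x => conv (fn n) ω x)
    H.hhg (fun n x => (conv_psi hω (h.fn_psi n)).2 _)
    (fun n => conv_mono hω (h.fn_psi n)) (conv_mono hω h.f_psi)
    (fun x => (conv_psi hω h.f_psi).2 _) (h.c_lim hω) h.g_lim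
    (fun x => Eventually.of_forall fun n => h.gn_eq n x) hE hx0 bad

theorem Lim.noBadF (hω : IsAveragingKernel ω) (H : Good hf hg us vs) (h : Lim ω hf hg vs f g α fn gn yn)
    {W : ℝ} (hW0 : 0 < W) (hW : ∀ x, W < |x| → ω x = 0) (hρ : ∀ x, |x| < W → 0 < ω x) (k : ℕ) :
    ∀ a b r, b ≤ 2 * W * k → 2 * W < b - a → r ∈ Ioo (0:ℝ) 1 → (∀ x ∈ Ioo a b, f x = r) →
      ∀ x0 ∈ Ioo a b, ∀ᶠ n in atTop, fn n x0 = r := by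
  have hα := h.α_le
  induction k with
  | zero =>
    intro a b r hb hab hr hfr x0 hx0
    exfalso
    have hX : (a + b) / 2 ∈ Ioo a b := ⟨by linarith, by linarith⟩
    have hb0 : b ≤ 0 := by simpa using hb
    have hrv : r ≤ vs := by
      rw [← hfr _ hX]; exact h.c_bot _ (by linarith [hX.2])
    refine absurd (H.pos (h.g_psi.2 ((a + b) / 2)) hr.1 hrv) (not_lt.2 ?_)
    refine h.en hω H hW0 hW ⟨hr.1.le, hr.2.le⟩ (h.g_psi.2 _) ?_ ?_
    · intro v hv u hu
      have hv1 : v ∈ Ioo (0:ℝ) 1 := ⟨hv.1, hv.2.trans hr.2⟩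
      have hu1 : u ∈ Ioo (0:ℝ) 1 := ⟨(h.g_psi.2 _).1.trans_lt hu.1, hu.2⟩
      have i1 : qz f v ≤ a := by
        apply le_of_forall_gt
        intro x hx
        obtain ⟨y, hy1, hy2⟩ := exists_between (lt_min hx (show a < b by linarith))
        have hy3 := lt_min_iff.1 hy2
        exact (qz_le h.f_psi h.f_int hv1 (by rw [hfr y ⟨hy1, hy3.2⟩]; exact hv.2.le)).trans_lt hy3.1
      have i2 := le_qz h.g_psi h.g_int hu1 hu.1
      linarith
    · intro u hu v hv
      have hv1 : v ∈ Ioo (0:ℝ) 1 := ⟨hr.1.trans hv.1, hv.2⟩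
      have hu1 : u ∈ Ioo (0:ℝ) 1 := ⟨hu.1, hu.2.trans_le (h.g_psi.2 _).2⟩
      have i1 : b ≤ qz f v := by
        apply le_of_forall_lt
        intro x hx
        obtain ⟨y, hy1, hy2⟩ := exists_between (max_lt hx (show a < b by linarith))
        have hy3 := max_lt_iff.1 hy1
        exact hy3.1.trans_le (le_qz h.f_psi h.f_int hv1 (by rw [hfr y ⟨hy3.2, hy2⟩]; exact hv.1))
      have i2 := qz_le h.g_psi h.g_int hu1 hu.2.le
      linarith
  | succ k ih =>
    intro a b r hb hab hr hfr x0 hx0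
    by_contra bad
    obtain ⟨s, t, c, m, has, hst, htb, hsc, htc, hsm, hmt, bad1⟩ := h.liftF hω H hfr hx0 bad
    have hgc := flat_conv_W hω h.g_psi (show s + α < t + α by linarith) hW0 hW hρ hsc htc
    have hfs := h.frel hω H s
    have hfsr : f s = r := hfr s ⟨has, by linarith⟩
    have hftr : f t = r := hfr t ⟨by linarith, htb⟩
    rw [hsc, hfsr] at hfs
    have hc : c ∈ Ioo (0:ℝ) 1 := rel_int H.rmf H.lmf (hsc ▸ (conv_psi hω h.g_psi).2 _) hr hfs
    obtain ⟨x1, hx1, bad2⟩ : ∃ x ∈ Ioo (s + α - W) (t + α + W), ¬ ∀ᶠ n in atTop, gn n x = c := by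
      by_contra hcon
      push Not at hcon
      exact bad1 (flat_conv_ev hω h.gn_psi hW0 hW (show s + α < m + α by linarith)
        (show m + α < t + α by linarith) (h.y_lim m) hcon)
    obtain ⟨s2, t2, r2, m2, has2, hst2, htb2, hsc2, htc2, hsm2, hmt2, bad3⟩ := h.liftG hω H hgc hx1 bad2
    have hfr2 := flat_conv_W hω h.f_psi hst2 hW0 hW hρ hsc2 htc2
    have hgs := h.grel hω H s2
    rw [hsc2, hgc s2 ⟨has2, by linarith⟩] at hgs
    have hr2 : r2 ∈ Ioo (0:ℝ) 1 := rel_int H.rmg H.lmg (hsc2 ▸ (conv_psi hω h.f_psi).2 _) hc hgs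
    obtain ⟨x2, hx2, bad4⟩ : ∃ x ∈ Ioo (s2 - W) (t2 + W), ¬ ∀ᶠ n in atTop, fn n x = r2 := by
      by_contra hcon
      push Not at hcon
      exact bad3 (flat_conv_ev hω h.fn_psi hW0 hW hsm2 hmt2 tendsto_const_nhds hcon)
    rcases lt_trichotomy r2 r with hlt | heq | hgt
    · refine bad4 (ih (s2 - W) (t2 + W) r2 ?_ (by linarith) hr2 hfr2 x2 hx2)
      have : t2 + W ≤ a := by
        by_contra hcon
        have hcon := not_le.1 hcon
        obtain ⟨y, hy1, hy2⟩ := exists_between (max_lt hcon (show s2 - W < t2 + W by linarith))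
        have hy3 := max_lt_iff.1 hy1
        obtain ⟨z, hz1, hz2⟩ := exists_between (lt_min hy3.1 (show a < b by linarith))
        have hz3 := lt_min_iff.1 hz2
        have := h.f_psi.1 hz3.1.le
        rw [hfr z ⟨hz1, hz3.2⟩, hfr2 y ⟨hy3.2, hy2⟩] at this
        linarith
      push_cast at hb
      linarith
    · subst heq
      refine absurd (H.cpos (u := c) (v := r2) ⟨⟨hc.1.le, hc.2.le⟩, ⟨hr.1.le, hr.2.le⟩, hgs, hfs⟩
        (fun h => by linarith [h.2, hr.1]) (fun h => by linarith [h.2, hr.2])) (not_lt.2 ?_)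
      refine h.en hω H hW0 hW ⟨hr.1.le, hr.2.le⟩ ⟨hc.1.le, hc.2.le⟩ ?_ ?_
      · intro v hv u hu
        have i1 := qz_le h.f_psi h.f_int (x := s) ⟨hv.1, hv.2.trans hr.2⟩ (by rw [hfsr]; exact hv.2.le)
        have i2 := le_qz h.g_psi h.g_int (x := s + α + W) ⟨hc.1.trans hu.1, hu.2⟩
          (by rw [hgc _ ⟨by linarith, by linarith⟩]; exact hu.1)
        linarith
      · intro u hu v hv
        have i1 := le_qz h.f_psi h.f_int (x := t) ⟨hr.1.trans hv.1, hv.2⟩ (by rw [hftr]; exact hv.1)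
        have i2 := qz_le h.g_psi h.g_int (x := t + α - W) ⟨hu.1, hu.2.trans hc.2⟩
          (by rw [hgc _ ⟨by linarith, by linarith⟩]; exact hu.2.le)
        linarith
    · obtain ⟨y, hy1, hy2⟩ := exists_between (lt_min (show s2 - W < t by linarith) (show s2 - W < t2 + W by linarith))
      have hy3 := lt_min_iff.1 hy2
      have := h.f_psi.1 hy3.1.le
      rw [hftr, hfr2 y ⟨hy1, hy3.2⟩] at this
      linarith

theorem Lim.noBadF' (hω : IsAveragingKernel ω) (H : Good hf hg us vs) (h : Lim ω hf hg vs f g α fn gn yn)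
    {W : ℝ} (hW0 : 0 < W) (hW : ∀ x, W < |x| → ω x = 0) (hρ : ∀ x, |x| < W → 0 < ω x)
    {a b r : ℝ} (hab : 2 * W < b - a) (hr : r ∈ Ioo (0:ℝ) 1) (hfr : ∀ x ∈ Ioo a b, f x = r) :
      ∀ x0 ∈ Ioo a b, ∀ᶠ n in atTop, fn n x0 = r := by
  obtain ⟨k, hk⟩ := exists_nat_gt (b / (2 * W))
  rw [div_lt_iff₀ (by linarith)] at hk
  exact h.noBadF hω H hW0 hW hρ k a b r (by linarith) hab hr hfr

theorem Lim.noBadG (hω : IsAveragingKernel ω) (H : Good hf hg us vs) (h : Lim ω hf hg vs f g α fn gn yn)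
    {W : ℝ} (hW0 : 0 < W) (hW : ∀ x, W < |x| → ω x = 0) (hρ : ∀ x, |x| < W → 0 < ω x)
    {a b c : ℝ} (hc : c ∈ Ioo (0:ℝ) 1) (hgc : ∀ x ∈ Ioo a b, g x = c) :
      ∀ x0 ∈ Ioo a b, ∀ᶠ n in atTop, gn n x0 = c := by
  intro x0 hx0
  by_contra bad
  obtain ⟨s2, t2, r2, m2, has2, hst2, htb2, hsc2, htc2, hsm2, hmt2, bad3⟩ := h.liftG hω H hgc hx0 bad
  have hfr2 := flat_conv_W hω h.f_psi hst2 hW0 hW hρ hsc2 htc2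
  have hgs := h.grel hω H s2
  rw [hsc2, hgc s2 ⟨has2, by linarith⟩] at hgs
  have hr2 : r2 ∈ Ioo (0:ℝ) 1 := rel_int H.rmg H.lmg (hsc2 ▸ (conv_psi hω h.f_psi).2 _) hc hgs
  exact bad3 (flat_conv_ev hω h.fn_psi hW0 hW hsm2 hmt2 tendsto_const_nhds
    (h.noBadF' hω H hW0 hW hρ (by linarith) hr2 hfr2))

theorem exact_ae {h E W : ℝ → ℝ} (hh : MemX h) (h0 : rm h 0 = 0) (h1 : lm h 1 = 1) (hE : MemPsi E) (hW : MemPsi W)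
    (hrel : ∀ x, E x ∈ Icc (lm h (W x)) (rm h (W x)))
    (hflat : ∀ s t, s < t → W s = W t → W s ∈ Ioo (0:ℝ) 1 → ∃ m ∈ Icc s t, E m = h (W s)) :
    (fun x => h (W x)) =ᵐ[volume] E := by
  have hfl : ∀ s t, s < t → W s = W t → ∃ m ∈ Icc s t, E m = h (W s) := by
    intro s t hst hWst
    have r1 := hrel s
    have r2 := self_mem_lr hh (hW.2 s)
    rcases (hW.2 s).1.lt_or_eq with a | a
    · rcases (hW.2 s).2.lt_or_eq with b | b
      · exact hflat s t hst hWst ⟨a, b⟩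
      · refine ⟨s, ⟨le_rfl, hst.le⟩, ?_⟩
        rw [b, h1, rm_one] at r1
        rw [b, h1, rm_one] at r2
        rw [b]
        linarith [r1.1, r1.2, r2.1, r2.2]
    · refine ⟨s, ⟨le_rfl, hst.le⟩, ?_⟩
      rw [← a, h0, lm_zero] at r1
      rw [← a, h0, lm_zero] at r2
      rw [← a]
      linarith [r1.1, r1.2, r2.1, r2.2]
  have k1 : ∀ x x', x < x' → E x ≤ h (W x') := by
    intro x x' hx
    rcases (hW.1 hx.le).lt_or_eq with a | a
    · exact (hrel x).2.trans (rm_le hh (hW.2 x).1 a (hW.2 x').2)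
    · obtain ⟨m, hm, e⟩ := hfl x x' hx a
      rw [← a, ← e]; exact hE.1 hm.1
  have k2 : ∀ x x', x < x' → h (W x) ≤ E x' := by
    intro x x' hx
    rcases (hW.1 hx.le).lt_or_eq with a | a
    · exact (le_lm hh (hW.2 x).1 a (hW.2 x').2).trans (hrel x').1
    · obtain ⟨m, hm, e⟩ := hfl x x' hx a
      rw [← e]; exact hE.1 hm.2
  have hc : ∀ᵐ x, ContinuousAt E x := by
    have := hE.1.countable_not_continuousAt
    exact this.ae_notMem volume |>.mono fun x hx => by simpa using hx
  filter_upwards [hc] with x hx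
  apply le_antisymm
  · refine ge_of_tendsto (hx.tendsto.mono_left (nhdsWithin_le_nhds (s := Ioi x))) ?_
    filter_upwards [self_mem_nhdsWithin] with y hy
    exact k2 x y hy
  · refine le_of_tendsto (hx.tendsto.mono_left (nhdsWithin_le_nhds (s := Iio x))) ?_
    filter_upwards [self_mem_nhdsWithin] with y hy
    exact k1 y x hy

structure Wave (ω hf hg F G : ℝ → ℝ) (α : ℝ) : Prop where
  F_psi : MemPsi F
  G_psi : MemPsi G
  F_int : Interpolates F 0 1
  G_int : Interpolates G 0 1
  G_eq : ∀ x, G x = hg (conv F ω x)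
  F_eq : ∀ x, F x = hf (conv G ω (x + α))

theorem no_flat {K : ℝ → ℝ} (hω : IsAveragingKernel ω) (hK : MemPsi K) (hI : Interpolates K 0 1)
    (hpos : ∀ x, 0 < ω x) {s t : ℝ} (hst : s < t) (h : conv K ω s = conv K ω t) : False := by
  have hc : ∀ x y, K x = K y := by
    intro x y
    refine flat_conv hω hK hst (ρ := |s| + |t| + |x| + |y| + 1) (by positivity) (fun x _ => hpos x) h x ?_ y ?_
    all_goals
      have := abs_nonneg x
      have := abs_nonneg y
      have := abs_nonneg s
      have := abs_nonneg t
      have := neg_abs_le s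
      have := neg_abs_le t
      have := neg_abs_le x
      have := neg_abs_le y
      have := le_abs_self s
      have := le_abs_self t
      have := le_abs_self x
      have := le_abs_self y
      constructor <;> linarith
  have e : K = fun _ => K 0 := funext fun x => hc x 0
  have h0 := hI.1
  have h1 := hI.2
  rw [e] at h0 h1
  have h0 := tendsto_nhds_unique h0 tendsto_const_nhds
  have h1 := tendsto_nhds_unique h1 tendsto_const_nhds
  linarith

theorem Lim.wave (hω : IsAveragingKernel ω) (hreg : IsRegularKernel ω) (H : Good hf hg us vs)
    (h : Lim ω hf hg vs f g α fn gn yn) : ∃ F G, Wave ω hf hg F G α := by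
  have hwpsi : MemPsi (fun x => conv g ω (x + α)) := psi_shift (conv_psi hω h.g_psi) α
  have eG : (fun x => hg (conv f ω x)) =ᵐ[volume] g := by
    refine exact_ae H.hhg H.rmg H.lmg h.g_psi (conv_psi hω h.f_psi) (h.grel hω H) ?_
    intro s t hst hW01 hc
    rcases hreg with hpos | ⟨W, hW0, hW, hρ⟩
    · exact (no_flat hω h.f_psi h.f_int hpos hst hW01).elim
    · have hfc := flat_conv_W hω h.f_psi hst hW0 hW hρ rfl hW01.symm
      obtain ⟨m, hm1, hm2⟩ := exists_between hst
      refine ⟨m, ⟨hm1.le, hm2.le⟩, ?_⟩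
      have ev := flat_conv_ev hω h.fn_psi hW0 hW hm1 hm2 tendsto_const_nhds
        (h.noBadF' hω H hW0 hW hρ (by linarith) hc hfc)
      refine tendsto_nhds_unique (h.g_lim m) (tendsto_const_nhds.congr' ?_)
      filter_upwards [ev] with n hn
      rw [h.gn_eq, hn]
  have eF : (fun x => hf (conv g ω (x + α))) =ᵐ[volume] f := by
    refine exact_ae H.hhf H.rmf H.lmf h.f_psi hwpsi (h.frel hω H) ?_
    intro s t hst hW01 hc
    rcases hreg with hpos | ⟨W, hW0, hW, hρ⟩
    · exact (no_flat hω h.g_psi h.g_int hpos (show s + α < t + α by linarith) hW01).elim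
    · have hgc := flat_conv_W hω h.g_psi (show s + α < t + α by linarith) hW0 hW hρ rfl hW01.symm
      obtain ⟨m, hm1, hm2⟩ := exists_between hst
      refine ⟨m, ⟨hm1.le, hm2.le⟩, ?_⟩
      have ev := flat_conv_ev hω h.gn_psi hW0 hW (show s + α < m + α by linarith)
        (show m + α < t + α by linarith) (h.y_lim m)
        (h.noBadG hω H hW0 hW hρ hc hgc)
      refine tendsto_nhds_unique (h.f_lim m) (tendsto_const_nhds.congr' ?_)
      filter_upwards [ev, h.fn_eq m] with n hn hn2
      rw [hn2, hn]
  have pF := psi_comp H.hhf hwpsi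
  have pG := psi_comp H.hhg (conv_psi hω h.f_psi)
  refine ⟨fun x => hf (conv g ω (x + α)), fun x => hg (conv f ω x), pF, pG, ⟨?_, ?_⟩, ⟨?_, ?_⟩, ?_, ?_⟩
  · exact rel_atBot H.hhf H.rmf (fun x => (pF.2 x).1) (fun x => (hwpsi.2 x).1)
      ((conv_atBot hω h.g_psi h.g_int.1).comp (tendsto_atBot_add_const_right _ α tendsto_id))
      (fun x => self_le_rm H.hhf (hwpsi.2 x))
  · exact rel_atTop H.hhf H.lmf (fun x => (pF.2 x).2) (fun x => (hwpsi.2 x).2)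
      ((conv_atTop hω h.g_psi h.g_int.2).comp (tendsto_atTop_add_const_right _ α tendsto_id))
      (fun x => lm_le_self H.hhf (hwpsi.2 x))
  · exact rel_atBot H.hhg H.rmg (fun x => (pG.2 x).1) (fun x => ((conv_psi hω h.f_psi).2 x).1)
      (conv_atBot hω h.f_psi h.f_int.1)
      (fun x => self_le_rm H.hhg ((conv_psi hω h.f_psi).2 x))
  · exact rel_atTop H.hhg H.lmg (fun x => (pG.2 x).2) (fun x => ((conv_psi hω h.f_psi).2 x).2)
      (conv_atTop hω h.f_psi h.f_int.2)
      (fun x => lm_le_self H.hhg ((conv_psi hω h.f_psi).2 x))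
  · intro x
    rw [conv_congr_ae eF]
  · intro x
    rw [conv_congr_ae eG]
end

section
variable {ω hf hg F G : ℝ → ℝ} {us vs α : ℝ}

theorem xinv_qz_eq {h f w : ℝ → ℝ} (hh : MemX h) (hf : MemPsi f) (hI : Interpolates f 0 1)
    (hw : Continuous w) (hw0 : ∀ x, w x ∈ Icc (0:ℝ) 1) {v : ℝ} (hv : v ∈ Ioo (0:ℝ) 1)
    (H : ∀ x, f x = h (w x)) : Xinv h v = w (qz f v) := by
  apply le_antisymm
  · exact xinv_qz hh hf hI hw (fun x => (hw0 x).1) hv (lt_add_one _)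
      (fun x _ _ => by rw [H]; exact self_le_rm hh (hw0 x))
  · have ht : Tendsto w (nhdsWithin (qz f v) (Iio (qz f v))) (nhds (w (qz f v))) :=
      (hw.tendsto _).mono_left nhdsWithin_le_nhds
    refine le_of_tendsto ht ?_
    filter_upwards [self_mem_nhdsWithin] with x hx
    exact le_Xinv hh (hw0 x) (by rw [← H]; exact lt_of_lt_qz hf hI hv hx)

theorem Wave.xf (hω : IsAveragingKernel ω) (H : Good hf hg us vs) (h : Wave ω hf hg F G α) {v : ℝ}
    (hv : v ∈ Ioo (0:ℝ) 1) : Xinv hf v = conv G ω (qz F v + α) :=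
  xinv_qz_eq (w := fun x => conv G ω (x + α)) H.hhf h.F_psi h.F_int
    ((conv_cont hω h.G_psi).comp (by fun_prop)) (fun x => (conv_psi hω h.G_psi).2 _) hv h.F_eq

theorem Wave.xg (hω : IsAveragingKernel ω) (H : Good hf hg us vs) (h : Wave ω hf hg F G α) {v : ℝ}
    (hv : v ∈ Ioo (0:ℝ) 1) : Xinv hg v = conv F ω (qz G v) :=
  xinv_qz_eq H.hhg h.G_psi h.G_int (conv_cont hω h.F_psi) (fun x => (conv_psi hω h.F_psi).2 _) hv h.G_eq

theorem prob01 : IsProbabilityMeasure (volume.restrict (Ioo (0:ℝ) 1)) :=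
  ⟨by rw [Measure.restrict_apply_univ]; simp⟩

theorem Wave.area (hω : IsAveragingKernel ω) (H : Good hf hg us vs) (h : Wave ω hf hg F G α) :
    Agap hf hg = -∫ p : ℝ × ℝ, (Om ω (qz F p.1 + 0 - qz G p.2) - Om ω (qz F p.1 + α - qz G p.2))
      ∂((volume.restrict (Ioo (0:ℝ) 1)).prod (volume.restrict (Ioo (0:ℝ) 1))) := by
  have := prob01
  have I0 := int2 hω h.F_psi h.G_psi h.F_int h.G_int 0 (le_refl (Ioo (0:ℝ) 1)) (le_refl (Ioo (0:ℝ) 1))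
  have I1 := int2 hω h.F_psi h.G_psi h.F_int h.G_int α (le_refl (Ioo (0:ℝ) 1)) (le_refl (Ioo (0:ℝ) 1))
  have i1 : ∫ x in (0:ℝ)..1, Xinv hf x = ∫ p : ℝ × ℝ, Om ω (qz F p.1 + α - qz G p.2)
      ∂((volume.restrict (Ioo (0:ℝ) 1)).prod (volume.restrict (Ioo (0:ℝ) 1))) := by
    rw [intervalIntegral.integral_of_le zero_le_one, integral_Ioc_eq_integral_Ioo, integral_prod _ I1]
    apply setIntegral_congr_fun measurableSet_Ioo
    intro v hv
    exact (h.xf hω H hv).trans (conv_quant hω h.G_psi h.G_int _)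
  have i2 : ∫ x in (0:ℝ)..1, Xinv hg x = ∫ p : ℝ × ℝ, (1 - Om ω (qz F p.1 + 0 - qz G p.2))
      ∂((volume.restrict (Ioo (0:ℝ) 1)).prod (volume.restrict (Ioo (0:ℝ) 1))) := by
    rw [intervalIntegral.integral_of_le zero_le_one, integral_Ioc_eq_integral_Ioo,
      integral_prod_symm (fun p : ℝ × ℝ => 1 - Om ω (qz F p.1 + 0 - qz G p.2)) ((integrable_const 1).sub I0)]
    apply setIntegral_congr_fun measurableSet_Ioo
    intro u hu
    refine (h.xg hω H hu).trans ((conv_quant hω h.F_psi h.F_int _).trans ?_)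
    congr 1
    funext v
    have := Om_symm hω (qz F v + 0 - qz G u)
    rw [show -(qz F v + 0 - qz G u) = qz G u - qz F v by ring] at this
    linarith
  rw [integral_sub (integrable_const 1) I0] at i2
  unfold Agap Pot
  rw [i1, i2, integral_sub I0 I1]
  simp only [integral_const, probReal_univ, smul_eq_mul]
  ring

theorem Wave.signs (hω : IsAveragingKernel ω) (hreg : IsRegularKernel ω) (H : Good hf hg us vs)
    (h : Wave ω hf hg F G α) (hα : α ≤ 0) :
    Agap hf hg ≤ 0 ∧ -Agap hf hg ≤ kerSup ω * (-α) ∧ (α < 0 → Agap hf hg ≠ 0) := by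
  have := prob01
  have I0 := int2 hω h.F_psi h.G_psi h.F_int h.G_int 0 (le_refl (Ioo (0:ℝ) 1)) (le_refl (Ioo (0:ℝ) 1))
  have I1 := int2 hω h.F_psi h.G_psi h.F_int h.G_int α (le_refl (Ioo (0:ℝ) 1)) (le_refl (Ioo (0:ℝ) 1))
  have hA := h.area hω H
  have hnn : ∀ p : ℝ × ℝ, 0 ≤ Om ω (qz F p.1 + 0 - qz G p.2) - Om ω (qz F p.1 + α - qz G p.2) := fun p =>
    sub_nonneg.2 (Om_mono hω (by linarith))
  have hint := I0.sub I1
  refine ⟨?_, ?_, ?_⟩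
  · rw [hA]; exact neg_nonpos.2 (integral_nonneg hnn)
  · rw [hA, neg_neg]
    have := integral_mono hint (integrable_const (kerSup ω * (-α))) (fun p => by
      have := Om_lip hω (show qz F p.1 + α - qz G p.2 ≤ qz F p.1 + 0 - qz G p.2 by linarith)
      have e : qz F p.1 + 0 - qz G p.2 - (qz F p.1 + α - qz G p.2) = -α := by ring
      rw [e] at this
      exact this)
    simpa using this
  · intro hα0 hA0
    rw [hA0] at hA
    have hae := (integral_eq_zero_iff_of_nonneg hnn hint).1 (by
      have := neg_eq_zero.1 hA.symm
      exact this)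
    have hae2 := Measure.ae_ae_of_ae_prod hae
    have Iex : ∀ {P : ℝ → Prop}, (∀ᵐ v ∂(volume.restrict (Ioo (0:ℝ) 1)), P v) → ∀ a b, 0 ≤ a → a < b → b ≤ 1 →
        ∃ v, v ∈ Ioo a b ∧ P v := by
      intro P hP a b ha hab hb
      by_contra hcon
      push Not at hcon
      have : volume (Ioo a b) = 0 := by
        rw [ae_restrict_iff' measurableSet_Ioo] at hP
        refine measure_mono_null ?_ (ae_iff.1 hP)
        intro v hv
        simp only [mem_setOf_eq, not_forall]
        exact ⟨⟨ha.trans_lt hv.1, hv.2.trans_le hb⟩, hcon v hv⟩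
      rw [Real.volume_Ioo, ENNReal.ofReal_eq_zero] at this
      linarith
    obtain ⟨v, hv, hgood⟩ := Iex hae2 0 vs le_rfl H.vs_mem.1 H.vs_mem.2.le
    have hv1 : v ∈ Ioo (0:ℝ) 1 := ⟨hv.1, hv.2.trans H.vs_mem.2⟩
    have hOm : ∀ {d : ℝ}, Om ω (d + 0) - Om ω (d + α) = 0 → ¬ ∀ x ∈ Ioo (d + α) d, 0 < ω x := by
      intro d hd hc
      have := Om_lt hω (show d + α < d by linarith) hc
      rw [add_zero] at hd
      linarith
    rcases hreg with hpos | ⟨W, hW0, hW, hρ⟩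
    · obtain ⟨u, hu, hu2⟩ := Iex hgood 0 1 le_rfl one_pos le_rfl
      refine hOm (d := qz F v - qz G u) ?_ (fun x _ => hpos x)
      simp only [Pi.zero_apply] at hu2
      rw [show qz F v - qz G u + 0 = qz F v + 0 - qz G u by ring,
        show qz F v - qz G u + α = qz F v + α - qz G u by ring]
      exact hu2
    · have dich : ∀ u, Om ω (qz F v + 0 - qz G u) - Om ω (qz F v + α - qz G u) = 0 →
          qz F v + W ≤ qz G u ∨ qz G u ≤ qz F v + α - W := by
        intro u hu
        by_contra hcon
        push Not at hcon
        set d := qz F v - qz G u with hd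
        have hlt : Om ω (d + α) < Om ω d := by
          have a1 : max (d + α) (-W) < min d W := by
            rw [max_lt_iff, lt_min_iff, lt_min_iff]
            exact ⟨⟨by linarith, by linarith⟩, by linarith, by linarith⟩
          have a2 := Om_lt hω a1 (fun x hx => hρ x (abs_lt.2
            ⟨(le_max_right _ _).trans_lt hx.1, hx.2.trans_le (min_le_right _ _)⟩))
          exact (Om_mono hω (le_max_left (d + α) (-W))).trans_lt (a2.trans_le (Om_mono hω (min_le_left d W)))
        rw [show qz F v + 0 - qz G u = d by rw [hd]; ring, show qz F v + α - qz G u = d + α by rw [hd]; ring] at hu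
        linarith
      have hq := h.G_psi.2 (qz F v)
      refine absurd (H.pos hq hv.1 hv.2.le) (not_lt.2 ?_)
      have := energy (hf := hf) (hg := hg) (η := α) (ε := 0) (p := v) (p' := v) (q := G (qz F v)) (q' := G (qz F v))
        hω h.F_psi h.G_psi h.F_int h.G_int hv.1.le le_rfl hv1.2.le hq.1 le_rfl hq.2 le_rfl ?_ ?_ ?_ ?_
      · rw [max_eq_right hα] at this; linarith
      · intro v' hv'
        exact (h.xf hω H ⟨hv'.1, hv'.2.trans hv1.2⟩).le
      · intro u hu
        exact (h.xg hω H ⟨hu.1, hu.2.trans_le hq.2⟩).le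
      · intro v' hv' u hu
        obtain ⟨u', hu', hu2⟩ := Iex hgood (G (qz F v)) u hq.1 hu.1 hu.2.le
        have hu1' : u' ∈ Ioo (0:ℝ) 1 := ⟨hq.1.trans_lt hu'.1, hu'.2.trans hu.2⟩
        have j1 := le_qz h.G_psi h.G_int hu1' hu'.1
        have j2 := qz_monoOn h.G_psi h.G_int hu1' ⟨hu1'.1.trans hu'.2, hu.2⟩ hu'.2.le
        have j3 := qz_monoOn h.F_psi h.F_int ⟨hv'.1, hv'.2.trans hv1.2⟩ hv1 hv'.2.le
        rw [Om_zero hω hW hW0]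
        rcases dich u' hu2 with k | k <;> linarith
      · intro u hu v' hv'
        obtain ⟨u', hu', hu2⟩ := Iex hgood u (G (qz F v)) hu.1.le hu.2 hq.2
        have hu1' : u' ∈ Ioo (0:ℝ) 1 := ⟨hu.1.trans hu'.1, hu'.2.trans_le hq.2⟩
        have j1 := qz_le h.G_psi h.G_int hu1' hu'.2.le
        have j2 := qz_monoOn h.G_psi h.G_int ⟨hu.1, hu'.1.trans hu1'.2⟩ hu1' hu'.1.le
        have j3 := qz_monoOn h.F_psi h.F_int hv1 ⟨hv1.1.trans hv'.1, hv'.2⟩ hv'.1.le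
        rw [Om_zero hω hW hW0]
        rcases dich u' hu2 with k | k <;> linarith
end

/-- availability of approximants with nonpositive centre at level `N` -/
def AppN (ω hf hg : ℝ → ℝ) (vs : ℝ) (N : ℕ) : Prop :=
  ∃ δ K c F G, 0 < δ ∧ δ < 1 / ((N:ℝ) + 1) ∧ (N:ℝ) + 1 < δ * K ∧ c ≤ 0 ∧ Appr ω hf hg vs δ K c F G

theorem AppN.anti {ω hf hg : ℝ → ℝ} {vs : ℝ} {M N : ℕ} (hMN : M ≤ N) (h : AppN ω hf hg vs N) :
    AppN ω hf hg vs M := by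
  obtain ⟨δ, K, c, F, G, h1, h2, h3, h4, h5⟩ := h
  have : (M:ℝ) ≤ N := by exact_mod_cast hMN
  refine ⟨δ, K, c, F, G, h1, h2.trans_le ?_, by linarith, h4, h5⟩
  exact one_div_le_one_div_of_le (by positivity) (by linarith)

theorem wave_of_app {ω hf hg : ℝ → ℝ} (hω : IsAveragingKernel ω) (hreg : IsRegularKernel ω) {us vs : ℝ}
    (H : Good hf hg us vs) (h : ∀ N, AppN ω hf hg vs N) :
    ∃ F G α, Wave ω hf hg F G α ∧ α ≤ 0 := by
  choose δ K c F G h1 h2 h3 h4 h5 using h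
  obtain ⟨f, g, α, fn, gn, yn, hL⟩ := lim_exists hω H δ K c (fun n x => F n (x + c n)) (fun n x => G n (x + c n))
    h1 h2 h3 (fun n => rec_of_appr (h5 n) (h4 n))
  obtain ⟨F', G', hw⟩ := hL.wave hω hreg H
  exact ⟨F', G', α, hw, hL.α_le⟩

theorem app_or {ω hf hg : ℝ → ℝ} (hω : IsAveragingKernel ω) {us vs : ℝ}
    (H : Good hf hg us vs) : (∀ N, AppN ω hf hg vs N) ∨ (∀ N, AppN ω (hr hf) (hr hg) (1 - vs) N) := by
  by_contra hcon
  push Not at hcon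
  obtain ⟨⟨M, hM⟩, ⟨N, hN⟩⟩ := hcon
  set n := max M N with hn
  have hp : (0:ℝ) < (n:ℝ) + 1 := by positivity
  have hδ : (0:ℝ) < 1 / (2 * ((n:ℝ) + 1)) := by positivity
  obtain ⟨c, F, G, hA⟩ := appr_exists hω H.hhf H.hhg H.vs_mem hδ
    (show (0:ℝ) < ((n:ℝ) + 2) * (2 * ((n:ℝ) + 1)) by positivity)
  have hd : 1 / (2 * ((n:ℝ) + 1)) < 1 / ((n:ℝ) + 1) := one_div_lt_one_div_of_lt hp (by linarith)
  have hk : (n:ℝ) + 1 < 1 / (2 * ((n:ℝ) + 1)) * (((n:ℝ) + 2) * (2 * ((n:ℝ) + 1))) := by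
    have : 1 / (2 * ((n:ℝ) + 1)) * (((n:ℝ) + 2) * (2 * ((n:ℝ) + 1))) = (n:ℝ) + 2 := by field_simp
    linarith
  rcases le_total c 0 with hc | hc
  · exact hM (AppN.anti (le_max_left M N) ⟨_, _, c, F, G, hδ, hd, hk, hc, hA⟩)
  · exact hN (AppN.anti (le_max_right M N) ⟨_, _, -c, _, _, hδ, hd, hk, by linarith, appr_refl hω hA⟩)

theorem Good.refl {hf hg : ℝ → ℝ} {us vs : ℝ} (H : Good hf hg us vs) :
    Good (hr hf) (hr hg) (1 - us) (1 - vs) :=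
  ⟨hr_memX H.hhf, hr_memX H.hhg, gap_hr H.hhf H.hhg H.hgap, cross_hr H.hhf H.hhg H.cross,
    fun h => H.n1 ⟨by linarith [h.1], by linarith [h.2]⟩, fun h => H.n0 ⟨by linarith [h.1], by linarith [h.2]⟩⟩

theorem int_refl {f : ℝ → ℝ} (h : Interpolates f 0 1) : Interpolates (fun x => 1 - f (-x)) 0 1 := by
  constructor
  · have := (h.2.comp tendsto_neg_atBot_atTop).const_sub 1
    rwa [sub_self] at this
  · have := (h.1.comp tendsto_neg_atTop_atBot).const_sub 1
    rwa [sub_zero] at this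

theorem Wave.refl {ω hf hg F G : ℝ → ℝ} {α : ℝ} (hω : IsAveragingKernel ω)
    (h : Wave ω (hr hf) (hr hg) F G α) :
    Wave ω hf hg (fun x => 1 - F (-x)) (fun x => 1 - G (-x)) (-α) := by
  refine ⟨psi_refl h.F_psi, psi_refl h.G_psi, int_refl h.F_int, int_refl h.G_int, fun x => ?_, fun x => ?_⟩
  · rw [conv_refl hω h.F_psi, h.G_eq, hr, sub_sub_cancel]
  · rw [conv_refl hω h.G_psi, h.F_eq, hr, sub_sub_cancel, neg_add, neg_neg]

theorem wave_final {ω hf hg F G : ℝ → ℝ} {us vs α : ℝ} (hω : IsAveragingKernel ω) (hreg : IsRegularKernel ω)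
    (H : Good hf hg us vs) (h : Wave ω hf hg F G α) (hα : α ≤ 0) :
    Real.sign α = Real.sign (Agap hf hg) ∧ |Agap hf hg| / kerSup ω ≤ |α| := by
  obtain ⟨h1, h2, h3⟩ := h.signs hω hreg H hα
  constructor
  · rcases hα.lt_or_eq with h | h
    · rw [Real.sign_of_neg h, Real.sign_of_neg (lt_of_le_of_ne h1 (h3 h))]
    · rw [h, neg_zero, mul_zero] at h2
      rw [h, show Agap hf hg = 0 by linarith]
  · rw [abs_of_nonpos h1, abs_of_nonpos hα]
    exact div_le_of_le_mul₀ (kerSup_nonneg) (by linarith) (by linarith)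

theorem main_exists
    (ω hf hg : ℝ → ℝ)
    (hω : IsAveragingKernel ω) (hreg : IsRegularKernel ω)
    (hhf : MemX hf) (hhg : MemX hg)
    (hgap : StrictPosGap hf hg) :
    ∃ F G : ℝ → ℝ, ∃ α : ℝ,
      MemPsi F ∧ MemPsi G ∧ Interpolates F 0 1 ∧ Interpolates G 0 1 ∧
      Real.sign α = Real.sign (Agap hf hg) ∧
      |Agap hf hg| / kerSup ω ≤ |α| ∧
      (∀ x, G x = hg (conv F ω x)) ∧
      (∀ x, F x = hf (conv G ω (x + α))) := by
  obtain ⟨us, vs, hc, n0, n1⟩ := hgap.1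
  have H : Good hf hg us vs := ⟨hhf, hhg, hgap, hc, n0, n1⟩
  rcases app_or hω H with h | h
  · obtain ⟨F, G, α, hw, hα⟩ := wave_of_app hω hreg H h
    obtain ⟨a, b⟩ := wave_final hω hreg H hw hα
    exact ⟨F, G, α, hw.F_psi, hw.G_psi, hw.F_int, hw.G_int, a, b, hw.G_eq, hw.F_eq⟩
  · obtain ⟨F, G, α, hw, hα⟩ := wave_of_app hω hreg H.refl h
    obtain ⟨a, b⟩ := wave_final hω hreg H.refl hw hα
    have hw' := hw.refl hω
    rw [Agap_hr hhf hhg, abs_neg] at b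
    rw [Agap_hr hhf hhg, Real.sign_neg] at a
    refine ⟨_, _, -α, hw'.F_psi, hw'.G_psi, hw'.F_int, hw'.G_int, ?_, ?_, hw'.G_eq, hw'.F_eq⟩
    · rw [Real.sign_neg, a, neg_neg]
    · rwa [abs_neg]

/-- **Existence of continuum spatial waves.** -/
theorem continuum_spatial_waves_exist
    (ω hf hg : ℝ → ℝ)
    (hω : IsAveragingKernel ω) (hreg : IsRegularKernel ω)
    (hhf : MemX hf) (hhg : MemX hg)
    (hgap : StrictPosGap hf hg) :
    ∃ F G : ℝ → ℝ, ∃ α : ℝ,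
      MemPsi F ∧ MemPsi G ∧ Interpolates F 0 1 ∧ Interpolates G 0 1 ∧
      Real.sign α = Real.sign (Agap hf hg) ∧
      |Agap hf hg| / kerSup ω ≤ |α| ∧
      (∀ x, G x = hg (conv F ω x)) ∧
      (∀ x, F x = hf (conv G ω (x + α))) := by
  exact main_exists ω hf hg hω hreg hhf hhg hgap
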